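/- Let (R, m) be a d-dimensional complete Noetherian local domain of prime characteristic p with absolute integral closure R^+, and let x_1, …, x_d be a system of parameters of R. Then for every 1 ≤ n ≤ d and every y ∈ R, there exists a positive integer N_0 such that (x_1, …, x_n)R^+ :_{R^+} y^∞ = (x_1, …, x_n)R^+ :_{R^+} y^{N_0}. -/

import Mathlib

open IsLocalRing TensorProduct
set_option synthInstance.maxHeartbeats 1000000
set_option maxHeartbeats 1000000

/-- The absolute integral closure `R⁺` of a domain `R`: the integral closure of `R`
in an algebraic closure of its fraction field. -/
noncomputable abbrev RPlus (R : Type) [CommRing R] [IsDomain R] : Type :=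
  ↥(integralClosure R (AlgebraicClosure (FractionRing R)))

/-- A system of parameters of a local ring: `d` elements generating an ideal whose
radical is the maximal ideal, where `d` is the Krull dimension. -/
def IsSOP (R : Type) [CommRing R] [IsLocalRing R] {d : ℕ} (x : Fin d → R) : Prop :=
  ringKrullDim R = d ∧ (Ideal.span (Set.range x)).radical = maximalIdeal R


open IsLocalRing TensorProduct
set_option synthInstance.maxHeartbeats 1000000
set_option maxHeartbeats 1000000

section Homol
open Function

/-- Vanishing of first Tor, elementary form. -/
def T1 (C : Type) [CommRing C] (X M : Type) [AddCommGroup X] [Module C X]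
    [AddCommGroup M] [Module C M] : Prop :=
  ∀ (X₁ L : Type) [AddCommGroup X₁] [Module C X₁] [AddCommGroup L] [Module C L]
    (f : X₁ →ₗ[C] L) (g : L →ₗ[C] X), Module.Flat C L → Injective f → Exact f g →
    Surjective g → Injective (f.rTensor M)

variable {C : Type} [CommRing C]

theorem exists_free_pres (X : Type) [AddCommGroup X] [Module C X] :
    ∃ (X₁ L : Type) (_ : AddCommGroup X₁) (_ : Module C X₁) (_ : AddCommGroup L) (_ : Module C L)
    (f : X₁ →ₗ[C] L) (g : L →ₗ[C] X), Module.Flat C L ∧ Injective f ∧ Exact f g ∧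
    Surjective g := by
  let g := Finsupp.linearCombination C (id : X → X)
  refine ⟨LinearMap.ker g, X →₀ C, inferInstance, inferInstance, inferInstance, inferInstance,
    (LinearMap.ker g).subtype, g, inferInstance, Subtype.val_injective, ?_, ?_⟩
  · exact LinearMap.exact_subtype_ker_map g
  · exact Finsupp.linearCombination_id_surjective C X

variable {X M : Type} [AddCommGroup X] [Module C X] [AddCommGroup M] [Module C M]

theorem T1.symm (h : T1 C X M) : T1 C M X := by
  intro N F _ _ _ _ i q hF hi he hs
  obtain ⟨X₁, L, _, _, _, _, f, g, hL, hf, hfg, hg⟩ := exists_free_pres (C := C) X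
  rw [← LinearMap.lTensor_inj_iff_rTensor_inj]
  exact lTensor_injective_of_exact_of_exact_of_rTensor_injective hfg hg he hs
    (h X₁ L f g hL hf hfg hg) (Module.Flat.lTensor_preserves_injective_linearMap _ hi)

theorem T1.of_pres {X₁ L : Type} [AddCommGroup X₁] [Module C X₁] [AddCommGroup L] [Module C L]
    (f : X₁ →ₗ[C] L) (g : L →ₗ[C] X) (hfg : Exact f g)
    (hg : Surjective g) (h : Injective (f.rTensor M)) [Module.Flat C L] : T1 C X M := by
  apply T1.symm
  intro N F _ _ _ _ i q hF hi he hs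
  rw [← LinearMap.lTensor_inj_iff_rTensor_inj]
  exact lTensor_injective_of_exact_of_exact_of_rTensor_injective hfg hg he hs
    h (Module.Flat.lTensor_preserves_injective_linearMap _ hi)

theorem T1.of_flat_right [Module.Flat C M] : T1 C X M := by
  intro N F _ _ _ _ i q hF hi he hs
  exact Module.Flat.rTensor_preserves_injective_linearMap _ hi

/-- iterated syzygies -/
def Syz (C : Type) [CommRing C] : ℕ → ∀ (X : Type) [AddCommGroup X] [Module C X], Prop
  | 0, _, _, _ => True
  | k + 1, X, _, _ => ∃ (L : Type) (_ : AddCommGroup L) (_ : Module C L) (Y : Type)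
      (_ : AddCommGroup Y) (_ : Module C Y) (f : X →ₗ[C] L) (g : L →ₗ[C] Y),
      Module.Flat C L ∧ Injective f ∧ Exact f g ∧ Surjective g ∧ Syz C k Y

theorem Syz.mono {k : ℕ} : ∀ {X : Type} [AddCommGroup X] [Module C X],
    Syz C (k + 1) X → Syz C k X := by
  induction k with
  | zero => intros; trivial
  | succ k ih =>
    rintro X _ _ ⟨L, _, _, Y, _, _, f, g, h1, h2, h3, h4, h5⟩
    exact ⟨L, _, _, Y, _, _, f, g, h1, h2, h3, h4, ih h5⟩

theorem Syz.mono' {k l : ℕ} (h : k ≤ l) {X : Type} [AddCommGroup X] [Module C X]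
    (hX : Syz C l X) : Syz C k X := by
  induction h with
  | refl => exact hX
  | step _ ih => exact ih hX.mono

theorem Syz.congr {k : ℕ} {X X' : Type} [AddCommGroup X] [Module C X] [AddCommGroup X']
    [Module C X'] (e : X' ≃ₗ[C] X) (h : Syz C k X) : Syz C k X' := by
  cases k with
  | zero => trivial
  | succ k =>
    obtain ⟨L, _, _, Y, _, _, f, g, h1, h2, h3, h4, h5⟩ := h
    refine ⟨L, _, _, Y, _, _, f ∘ₗ e.toLinearMap, g, h1, h2.comp e.injective, ?_, h4, h5⟩
    intro y
    rw [h3 y]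
    constructor
    · rintro ⟨x, rfl⟩; exact ⟨e.symm x, by simp⟩
    · rintro ⟨x, rfl⟩; exact ⟨e x, by simp⟩

/-- finite projective (flat) dimension -/
def FPD (C : Type) [CommRing C] : ℕ → ∀ (X : Type) [AddCommGroup X] [Module C X], Prop
  | 0, X, _, _ => Module.Flat C X
  | k + 1, X, _, _ => ∃ (n : ℕ) (q : (Fin n → C) →ₗ[C] X), Surjective q ∧
      FPD C k (LinearMap.ker q)

theorem T1.of_syz_fpd {k : ℕ} : ∀ {X M : Type} [AddCommGroup X] [Module C X] [AddCommGroup M]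
    [Module C M], Syz C k X → FPD C k M → T1 C X M := by
  induction k with
  | zero =>
    intro X M _ _ _ _ _ h
    have : Module.Flat C M := h
    exact T1.of_flat_right
  | succ k ih =>
    rintro X M _ _ _ _ ⟨L, _, _, Y, _, _, f, g, h1, h2, h3, h4, h5⟩ ⟨n, q, hq, hk⟩
    have h := ih h5 hk
    apply T1.symm
    refine T1.of_pres (LinearMap.ker q).subtype q (LinearMap.exact_subtype_ker_map q) hq ?_
    have a1 : Injective (f.lTensor (LinearMap.ker q)) := by
      rw [LinearMap.lTensor_inj_iff_rTensor_inj]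
      exact h X L f g h1 h2 h3 h4
    have a2 : Injective ((LinearMap.ker q).subtype.rTensor L) :=
      Module.Flat.rTensor_preserves_injective_linearMap _ Subtype.val_injective
    have a3 := a2.comp a1
    have : (LinearMap.ker q).subtype.rTensor L ∘ f.lTensor (LinearMap.ker q)
        = f.lTensor _ ∘ (LinearMap.ker q).subtype.rTensor X := by
      rw [← LinearMap.coe_comp, ← LinearMap.coe_comp, LinearMap.rTensor_comp_lTensor,
        LinearMap.lTensor_comp_rTensor]
    rw [this] at a3
    exact a3.of_comp

theorem flat_of_T1 (h : ∀ I : Ideal C, I.FG → T1 C X (C ⧸ I)) : Module.Flat C X := by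
  rw [Module.Flat.iff_rTensor_injective]
  intro I hI
  exact (h I hI).symm I C I.subtype I.mkQ inferInstance Subtype.val_injective
    (LinearMap.exact_subtype_mkQ I) (Submodule.mkQ_surjective _)

/-- weak global dimension at most `D` -/
def WG (C : Type) [CommRing C] (D : ℕ) : Prop :=
  ∀ (X : Type) [AddCommGroup X] [Module C X], Syz C D X → Module.Flat C X

theorem fpd_of_syz [IsNoetherianRing C] {e : ℕ}
    (h : ∀ (X : Type) [AddCommGroup X] [Module C X], Module.Finite C X → Syz C e X →
      Module.Flat C X) (k : ℕ) : ∀ (j : ℕ) (M : Type) [AddCommGroup M] [Module C M],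
      Module.Finite C M → j + k = e → Syz C j M → FPD C k M := by
  induction k with
  | zero =>
    rintro j M _ _ hf rfl hs
    exact h M hf hs
  | succ k ih =>
    rintro j M _ _ hf he hs
    obtain ⟨n, q, hq⟩ := Module.Finite.exists_fin' C M
    refine ⟨n, q, hq, ih (j + 1) _ inferInstance (by omega) ?_⟩
    exact ⟨_, _, _, M, _, _, (LinearMap.ker q).subtype, q, inferInstance, Subtype.val_injective,
      LinearMap.exact_subtype_ker_map q, hq, hs⟩

theorem WG.of_fg [IsNoetherianRing C] {e : ℕ}
    (h : ∀ (X : Type) [AddCommGroup X] [Module C X], Module.Finite C X → Syz C e X →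
      Module.Flat C X) : WG C e := by
  intro X _ _ hX
  exact flat_of_T1 fun I _ => T1.of_syz_fpd hX (fpd_of_syz h e 0 _ inferInstance (by simp) trivial)

/-- ideals generated by regular sequences -/
inductive Reg (C : Type) [CommRing C] : ℕ → Ideal C → Prop
  | zero : Reg C 0 ⊥
  | succ (n : ℕ) (I : Ideal C) (w : C) (hI : Reg C n I) (hw : ∀ a, w * a ∈ I → a ∈ I) :
      Reg C (n + 1) (I ⊔ Ideal.span {w})

theorem T1.of_reg {n : ℕ} {I : Ideal C} (h : Reg C n I) :
    ∀ {X : Type} [AddCommGroup X] [Module C X], Syz C n X → T1 C X (C ⧸ I) := by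
  induction h with
  | zero =>
    intro X _ _ _
    have : Module.Flat C (C ⧸ (⊥ : Ideal C)) :=
      Module.Flat.of_linearEquiv (Submodule.quotEquivOfEqBot (⊥ : Ideal C) rfl)
    exact T1.of_flat_right
  | succ n I w hI hw ih =>
    intro X _ _ hs
    have t1 := ih hs.mono
    obtain ⟨L, _, _, Y, _, _, f, g, h1, h2, h3, h4, h5⟩ := hs
    have t2 := ih h5
    intro X₁ L₁ _ _ _ _ f₁ g₁ hL₁ hf₁ hfg₁ hg₁
    rw [← LinearMap.lTensor_inj_iff_rTensor_inj]
    let m : (C ⧸ I) →ₗ[C] (C ⧸ I) := w • LinearMap.id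
    let π : (C ⧸ I) →ₗ[C] (C ⧸ (I ⊔ Ideal.span {w})) := Submodule.factor le_sup_left
    have hm : Injective m := by
      rw [injective_iff_map_eq_zero]
      intro a ha
      obtain ⟨a, rfl⟩ := Ideal.Quotient.mk_surjective a
      have : Ideal.Quotient.mk I (w * a) = 0 := ha
      rw [Ideal.Quotient.eq_zero_iff_mem] at this ⊢
      exact hw a this
    have hπs : Surjective π := Submodule.factor_surjective le_sup_left
    have hex : Exact m π := by
      intro a
      obtain ⟨a, rfl⟩ := Ideal.Quotient.mk_surjective a
      have e1 : π (Ideal.Quotient.mk I a) = Ideal.Quotient.mk _ a := rfl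
      rw [e1, Ideal.Quotient.eq_zero_iff_mem]
      constructor
      · intro h
        obtain ⟨i, hi, b, hb, rfl⟩ := Submodule.mem_sup.1 h
        obtain ⟨c, rfl⟩ := Ideal.mem_span_singleton'.1 hb
        refine ⟨Ideal.Quotient.mk I c, ?_⟩
        change Ideal.Quotient.mk I (w * c) = _
        rw [map_add, Ideal.Quotient.eq_zero_iff_mem.2 hi, zero_add, mul_comm]
      · rintro ⟨c, hc⟩
        obtain ⟨c, rfl⟩ := Ideal.Quotient.mk_surjective c
        change Ideal.Quotient.mk I (w * c) = _ at hc
        rw [Ideal.Quotient.mk_eq_mk_iff_sub_mem] at hc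
        have : a = w * c - (w * c - a) := by ring
        rw [this]
        exact sub_mem (Ideal.mem_sup_right (Ideal.mem_span_singleton'.2 ⟨c, mul_comm _ _⟩))
          (Ideal.mem_sup_left hc)
    refine lTensor_injective_of_exact_of_exact_of_rTensor_injective hex hπs hfg₁ hg₁ ?_ ?_
    · have a1 : Injective (f.lTensor (C ⧸ I)) := by
        rw [LinearMap.lTensor_inj_iff_rTensor_inj]
        exact t2 X L f g h1 h2 h3 h4
      have a2 : Injective (m.rTensor L) :=
        Module.Flat.rTensor_preserves_injective_linearMap _ hm
      have a3 := a2.comp a1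
      have : m.rTensor L ∘ f.lTensor (C ⧸ I) = f.lTensor _ ∘ m.rTensor X := by
        rw [← LinearMap.coe_comp, ← LinearMap.coe_comp, LinearMap.rTensor_comp_lTensor,
          LinearMap.lTensor_comp_rTensor]
      rw [this] at a3
      exact a3.of_comp
    · rw [LinearMap.lTensor_inj_iff_rTensor_inj]
      exact t1 X₁ L₁ f₁ g₁ hL₁ hf₁ hfg₁ hg₁

theorem WG.of_reg_maximalIdeal [IsNoetherianRing C] [IsLocalRing C] {d : ℕ}
    (h : Reg C d (maximalIdeal C)) : WG C d := by
  apply WG.of_fg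
  intro X _ _ _ hs
  have t : T1 C X (ResidueField C) := T1.of_reg h hs
  obtain ⟨n, q, hq⟩ := Module.Finite.exists_fin' C X
  have : Module.Free C X := by
    refine Module.free_of_lTensor_residueField_injective (LinearMap.ker q).subtype q hq
      (LinearMap.exact_subtype_ker_map q) ?_
    rw [LinearMap.lTensor_inj_iff_rTensor_inj]
    exact t _ _ _ q inferInstance Subtype.val_injective
      (LinearMap.exact_subtype_ker_map q) hq
  infer_instance

theorem WG.down [IsNoetherianRing C] [IsLocalRing C] {δ e : ℕ} {I : Ideal C} (hI : Reg C δ I)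
    (k : ResidueField C →ₗ[C] C ⧸ I) (hk : Injective k) (he : δ ≤ e) (h : WG C (e + 1)) :
    WG C e := by
  apply WG.of_fg
  intro X _ _ _ hs
  have t : T1 C X (C ⧸ I) := T1.of_reg hI (hs.mono' he)
  obtain ⟨n, q, hq⟩ := Module.Finite.exists_fin' C X
  have hN : Module.Flat C (LinearMap.ker q) := h _
    ⟨_, _, _, X, _, _, (LinearMap.ker q).subtype, q, inferInstance, Subtype.val_injective,
      LinearMap.exact_subtype_ker_map q, hq, hs⟩
  have : Module.Free C X := by
    refine Module.free_of_lTensor_residueField_injective (LinearMap.ker q).subtype q hq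
      (LinearMap.exact_subtype_ker_map q) ?_
    rw [LinearMap.lTensor_inj_iff_rTensor_inj]
    have a1 : Injective ((LinearMap.ker q).subtype.rTensor (C ⧸ I)) :=
      t _ _ _ q inferInstance Subtype.val_injective (LinearMap.exact_subtype_ker_map q) hq
    have a2 : Injective (k.lTensor (LinearMap.ker q)) :=
      Module.Flat.lTensor_preserves_injective_linearMap _ hk
    have a3 := a1.comp a2
    have : (LinearMap.ker q).subtype.rTensor (C ⧸ I) ∘ k.lTensor (LinearMap.ker q)
        = k.lTensor _ ∘ (LinearMap.ker q).subtype.rTensor (ResidueField C) := by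
      rw [← LinearMap.coe_comp, ← LinearMap.coe_comp, LinearMap.rTensor_comp_lTensor,
        LinearMap.lTensor_comp_rTensor]
    rw [this] at a3
    exact a3.of_comp
  infer_instance

theorem Reg.exists_maximal [IsNoetherianRing C] [IsLocalRing C] {D : ℕ} (hD : WG C D) :
    ∃ (δ : ℕ) (I : Ideal C), I ≤ maximalIdeal C ∧ Reg C δ I ∧ WG C δ := by
  let S : Set (Ideal C) := {I | I ≤ maximalIdeal C ∧ ∃ δ, Reg C δ I}
  obtain ⟨I, ⟨hIm, δ, hI⟩, hmax⟩ :=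
    set_has_maximal_iff_noetherian.2 (inferInstanceAs (IsNoetherian C C)) S
      ⟨⊥, bot_le, 0, Reg.zero⟩
  refine ⟨δ, I, hIm, hI, ?_⟩
  have hz : (maximalIdeal C : Set C) ⊆ ⋃ P ∈ associatedPrimes C (C ⧸ I), (P : Set C) := by
    rw [biUnion_associatedPrimes_eq_zero_divisors]
    intro w hw
    by_contra hc
    have hw' : ∀ a, w * a ∈ I → a ∈ I := by
      intro a ha
      by_contra ha'
      apply hc
      refine ⟨Ideal.Quotient.mk I a, ?_, ?_⟩
      · rwa [ne_eq, Ideal.Quotient.eq_zero_iff_mem]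
      · exact Ideal.Quotient.eq_zero_iff_mem.2 ha
    have hm : I ⊔ Ideal.span {w} ∈ S :=
      ⟨sup_le hIm (by rwa [Ideal.span_singleton_le_iff_mem]), δ + 1, Reg.succ δ I w hI hw'⟩
    have hwI : w ∈ I := by
      by_contra hwI
      refine hmax _ hm (lt_of_le_of_ne le_sup_left fun h => hwI ?_)
      rw [h]
      exact Ideal.mem_sup_right (Ideal.mem_span_singleton_self w)
    exact (maximalIdeal.isMaximal C).ne_top
      ((Ideal.eq_top_iff_one _).2 (hIm (hw' 1 (by simpa using hwI))))
  obtain ⟨P, hP, hmP⟩ := (Ideal.subset_union_prime_finite (associatedPrimes.finite C (C ⧸ I)) 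
    (f := id) ⊥ ⊥ (fun P hP _ _ => hP.1)).1 hz
  have hPm : P = maximalIdeal C :=
    ((maximalIdeal.isMaximal C).eq_of_le hP.1.ne_top hmP).symm
  subst hPm
  obtain ⟨k, hk⟩ : ∃ k : ResidueField C →ₗ[C] C ⧸ I, Injective k := by
    obtain ⟨_, x, hx⟩ := (isAssociatedPrime_iff.1 hP)
    have hmem : ∀ c : C, c ∈ maximalIdeal C ↔ c • x = 0 := by
      intro c
      rw [hx, Submodule.mem_colon_singleton, Submodule.mem_bot]
    suffices h : ∃ k : (C ⧸ maximalIdeal C) →ₗ[C] C ⧸ I, Injective k from h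
    refine ⟨Submodule.liftQ (maximalIdeal C) (LinearMap.toSpanSingleton C (C ⧸ I) x)
      (fun c hc => by simpa using (hmem c).1 hc), ?_⟩
    rw [injective_iff_map_eq_zero]
    intro a ha
    obtain ⟨a, rfl⟩ := Submodule.mkQ_surjective _ a
    rw [Submodule.mkQ_apply, Submodule.liftQ_apply, LinearMap.toSpanSingleton_apply,
      ← hmem] at ha
    rw [Submodule.mkQ_apply, Submodule.Quotient.mk_eq_zero]
    exact ha
  rcases le_total D δ with h | h
  · intro X _ _ hX
    exact hD X (hX.mono' h)
  · induction h with
    | refl => exact hD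
    | step h ih => exact ih (WG.down hI k hk h hD)

end Homol

open IsLocalRing TensorProduct
set_option synthInstance.maxHeartbeats 1000000
set_option maxHeartbeats 1000000

section Melk
variable {C : Type} [CommRing C] {H : Type} [AddCommGroup H] [Module C H]

theorem artinian_of_torsion (x : C) (ht : ∀ h : H, ∃ N : ℕ, x ^ N • h = 0)
    (hk : IsArtinian C (LinearMap.ker (LinearMap.lsmul C H x))) : IsArtinian C H := by
  rw [← monotone_stabilizes_iff_artinian]
  intro W'
  let W : ℕ → Submodule C H := fun k => OrderDual.ofDual (W' k)
  have hW : ∀ k l, k ≤ l → W l ≤ W k := fun k l h => W'.monotone h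
  let V : ℕ → ℕ → Submodule C (LinearMap.ker (LinearMap.lsmul C H x)) := fun k n =>
    Submodule.comap (Submodule.subtype _)
      (Submodule.map (LinearMap.lsmul C H (x ^ n)) (W k))
  have hVmem : ∀ k n (h : LinearMap.ker (LinearMap.lsmul C H x)), h ∈ V k n ↔
      ∃ w ∈ W k, x ^ n • w = h := by
    intro k n h
    simp only [V, Submodule.mem_comap, Submodule.mem_map, LinearMap.lsmul_apply]
    rfl
  have hV1 : ∀ k l n, k ≤ l → V l n ≤ V k n := by
    intro k l n hkl h
    rw [hVmem, hVmem]
    rintro ⟨w, hw, e⟩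
    exact ⟨w, hW k l hkl hw, e⟩
  have hV2 : ∀ k n m, n ≤ m → V k m ≤ V k n := by
    intro k n m hnm h
    rw [hVmem, hVmem]
    rintro ⟨w, hw, e⟩
    refine ⟨x ^ (m - n) • w, Submodule.smul_mem _ _ hw, ?_⟩
    rw [smul_smul, ← pow_add, Nat.add_sub_cancel' hnm, e]
  have stab : ∀ f : ℕ → Submodule C (LinearMap.ker (LinearMap.lsmul C H x)), Antitone f →
      ∃ n, ∀ m, n ≤ m → f n = f m := by
    intro f hf
    exact monotone_stabilizes_iff_artinian.2 hk ⟨fun n => OrderDual.toDual (f n), fun a b h => hf h⟩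
  obtain ⟨k0, hk0⟩ := stab (fun k => V k k) (fun a b h => (hV1 a b b h).trans (hV2 a a b h))
  have : ∀ n, ∃ K, ∀ k, K ≤ k → V K n = V k n := fun n =>
    stab (fun k => V k n) (fun a b h => hV1 a b n h)
  choose Kn hKn using this
  let K := max k0 ((Finset.range k0).sup Kn)
  have key : ∀ n k, K ≤ k → V K n = V k n := by
    intro n k hk
    rcases lt_or_ge n k0 with hn | hn
    · have h1 : Kn n ≤ K := le_trans (Finset.le_sup (Finset.mem_range.2 hn)) (le_max_right _ _)
      rw [← hKn n K h1, ← hKn n k (h1.trans hk)]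
    · have hk0K : k0 ≤ K := le_max_left _ _
      have : ∀ l, K ≤ l → V l n = V k0 k0 := by
        intro l hl
        apply le_antisymm
        · exact (hV1 k0 l n (hk0K.trans hl)).trans (hV2 k0 k0 n hn)
        · rw [hk0 (max l n) (le_trans (hk0K.trans hl) (le_max_left _ _))]
          exact (hV1 l _ _ (le_max_left _ _)).trans (hV2 l n _ (le_max_right _ _))
      rw [this K le_rfl, this k hk]
  refine ⟨K, fun k hk => ?_⟩
  change W K = W k
  refine le_antisymm ?_ (hW _ _ hk)
  have : ∀ n, ∀ h ∈ W K, x ^ n • h = 0 → h ∈ W k := by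
    intro n
    induction n with
    | zero => intro h _ h0; rw [pow_zero, one_smul] at h0; rw [h0]; exact zero_mem _
    | succ n ih =>
      intro h hh h0
      have hker : x ^ n • h ∈ LinearMap.ker (LinearMap.lsmul C H x) := by
        rw [LinearMap.mem_ker, LinearMap.lsmul_apply, smul_smul, ← pow_succ', h0]
      have hm : (⟨_, hker⟩ : LinearMap.ker (LinearMap.lsmul C H x)) ∈ V K n :=
        (hVmem _ _ _).2 ⟨h, hh, rfl⟩
      rw [key n k hk, hVmem] at hm
      obtain ⟨w, hw, e⟩ := hm
      have := ih (h - w) (sub_mem hh (hW _ _ hk hw)) (by rw [smul_sub, e]; simp)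
      simpa using add_mem this hw
  intro h hh
  obtain ⟨N, hN⟩ := ht h
  exact this N h hh hN
end Melk

section Cplx
open Function
variable {C : Type} [CommRing C] (L : ℕ → Type) [∀ n, AddCommGroup (L n)] [∀ n, Module C (L n)]
  (d : ∀ n, L n →ₗ[C] L (n + 1))

theorem reg_exact (I : Ideal C) (w : C) :
    Exact (LinearMap.lsmul C (C ⧸ I) w)
      (Submodule.factor le_sup_left : (C ⧸ I) →ₗ[C] (C ⧸ (I ⊔ Ideal.span {w}))) := by
  intro a
  obtain ⟨a, rfl⟩ := Ideal.Quotient.mk_surjective a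
  have e1 : (Submodule.factor le_sup_left : (C ⧸ I) →ₗ[C] (C ⧸ (I ⊔ Ideal.span {w})))
    (Ideal.Quotient.mk I a) = Ideal.Quotient.mk _ a := rfl
  rw [e1, Ideal.Quotient.eq_zero_iff_mem]
  constructor
  · intro h
    obtain ⟨i, hi, b, hb, rfl⟩ := Submodule.mem_sup.1 h
    obtain ⟨c, rfl⟩ := Ideal.mem_span_singleton'.1 hb
    refine ⟨Ideal.Quotient.mk I c, ?_⟩
    change Ideal.Quotient.mk I (w * c) = _
    rw [map_add, Ideal.Quotient.eq_zero_iff_mem.2 hi, zero_add, mul_comm]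
  · rintro ⟨c, hc⟩
    obtain ⟨c, rfl⟩ := Ideal.Quotient.mk_surjective c
    change Ideal.Quotient.mk I (w * c) = _ at hc
    rw [Ideal.Quotient.mk_eq_mk_iff_sub_mem] at hc
    have : a = w * c - (w * c - a) := by ring
    rw [this]
    exact sub_mem (Ideal.mem_sup_right (Ideal.mem_span_singleton'.2 ⟨c, mul_comm _ _⟩))
      (Ideal.mem_sup_left hc)

def ZZ (M : Type) [AddCommGroup M] [Module C M] (n : ℕ) : Submodule C (L n ⊗[C] M) :=
  LinearMap.ker ((d n).rTensor M)

def BB (M : Type) [AddCommGroup M] [Module C M] : ∀ n : ℕ, Submodule C (L n ⊗[C] M)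
  | 0 => ⊥
  | n + 1 => LinearMap.range ((d n).rTensor M)

abbrev HH (M : Type) [AddCommGroup M] [Module C M] (n : ℕ) : Type :=
  (ZZ L d M n) ⧸ (BB L d M n).submoduleOf (ZZ L d M n)

section
variable {L d} {M M' : Type} [AddCommGroup M] [Module C M] [AddCommGroup M'] [Module C M']
  (φ : M →ₗ[C] M')

theorem d_lTensor (n : ℕ) (z : L n ⊗[C] M) :
    (d n).rTensor M' (φ.lTensor (L n) z) = φ.lTensor (L (n + 1)) ((d n).rTensor M z) := by
  rw [← LinearMap.comp_apply, ← LinearMap.comp_apply, LinearMap.rTensor_comp_lTensor,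
    LinearMap.lTensor_comp_rTensor]

theorem ZZ_map {n : ℕ} {z : L n ⊗[C] M} (hz : z ∈ ZZ L d M n) :
    φ.lTensor (L n) z ∈ ZZ L d M' n := by
  rw [ZZ, LinearMap.mem_ker] at hz ⊢
  rw [d_lTensor, hz, map_zero]

theorem BB_map {n : ℕ} {z : L n ⊗[C] M} (hz : z ∈ BB L d M n) :
    φ.lTensor (L n) z ∈ BB L d M' n := by
  cases n with
  | zero => rw [BB, Submodule.mem_bot] at hz ⊢; rw [hz, map_zero]
  | succ n =>
    obtain ⟨y, rfl⟩ := hz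
    exact ⟨φ.lTensor _ y, d_lTensor φ n y⟩

noncomputable def HHmap (n : ℕ) : HH L d M n →ₗ[C] HH L d M' n :=
  Submodule.mapQ _ _ ((φ.lTensor (L n)).restrict (p := ZZ L d M n) (q := ZZ L d M' n)
    (fun _ hz => ZZ_map φ hz))
    (fun z hz => BB_map φ (n := n) (z := z.1) hz)

theorem HH_mk_eq_zero {n : ℕ} (z : ZZ L d M n) :
    (Submodule.Quotient.mk z : HH L d M n) = 0 ↔ z.1 ∈ BB L d M n := by
  rw [Submodule.Quotient.mk_eq_zero]; rfl

variable (hdd : ∀ n, d (n + 1) ∘ₗ d n = 0)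
include hdd in
theorem dd_rTensor (n : ℕ) (y : L n ⊗[C] M) :
    (d (n + 1)).rTensor M ((d n).rTensor M y) = 0 := by
  rw [← LinearMap.comp_apply, ← LinearMap.rTensor_comp, hdd]; simp

include hdd in
theorem BB_le_ZZ (n : ℕ) : BB L d M n ≤ ZZ L d M n := by
  cases n with
  | zero => exact bot_le
  | succ n =>
    rintro _ ⟨y, rfl⟩
    exact dd_rTensor hdd n y

variable {M'' : Type} [AddCommGroup M''] [Module C M''] (ψ : M' →ₗ[C] M'')
  [hL : ∀ n, Module.Flat C (L n)]

include hdd hL in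
/-- exactness in the middle -/
theorem HH_artinian_of_exact (hφ : Injective φ) (hψ : Surjective ψ) (he : Exact φ ψ) (n : ℕ)
    (h1 : IsArtinian C (HH L d M n)) (h2 : IsArtinian C (HH L d M'' n)) :
    IsArtinian C (HH L d M' n) := by
  refine isArtinian_of_range_eq_ker (HHmap φ n) (HHmap ψ n) ?_
  have hinj : ∀ k, Injective (φ.lTensor (L k)) := fun k =>
    Module.Flat.lTensor_preserves_injective_linearMap _ hφ
  have hex : ∀ k, Exact (φ.lTensor (L k)) (ψ.lTensor (L k)) := fun k => lTensor_exact _ he hψ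
  apply le_antisymm
  · rintro _ ⟨z, rfl⟩
    obtain ⟨z, rfl⟩ := Submodule.Quotient.mk_surjective _ z
    rw [LinearMap.mem_ker]
    change Submodule.Quotient.mk _ = _
    rw [HH_mk_eq_zero]
    change ψ.lTensor (L n) (φ.lTensor (L n) z.1) ∈ _
    rw [(hex n).apply_apply_eq_zero]
    exact zero_mem _
  · intro z hz
    obtain ⟨⟨z, hz'⟩, rfl⟩ := Submodule.Quotient.mk_surjective _ z
    rw [LinearMap.mem_ker] at hz
    change Submodule.Quotient.mk _ = _ at hz
    rw [HH_mk_eq_zero] at hz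
    change ψ.lTensor (L n) z ∈ _ at hz
    obtain ⟨b, hb, hzb⟩ : ∃ b ∈ BB L d M' n, ψ.lTensor (L n) z = ψ.lTensor (L n) b := by
      cases n with
      | zero => exact ⟨0, zero_mem _, by rw [map_zero]; exact hz⟩
      | succ n =>
        obtain ⟨y, hy⟩ := hz
        obtain ⟨y, rfl⟩ := LinearMap.lTensor_surjective (L n) hψ y
        exact ⟨(d n).rTensor M' y, ⟨y, rfl⟩, by rw [← d_lTensor, hy]⟩
    have : ψ.lTensor (L n) (z - b) = 0 := by rw [map_sub, hzb, sub_self]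
    obtain ⟨t, ht⟩ := (hex n _).1 this
    have htz : t ∈ ZZ L d M n := by
      rw [ZZ, LinearMap.mem_ker]
      apply hinj (n + 1)
      rw [map_zero, ← d_lTensor, ht]
      exact sub_mem hz' (BB_le_ZZ hdd n hb)
    refine ⟨Submodule.Quotient.mk ⟨t, htz⟩, ?_⟩
    change Submodule.Quotient.mk _ = _
    rw [Submodule.Quotient.eq]
    change φ.lTensor (L n) t - z ∈ BB L d M' n
    rw [ht, sub_sub_cancel_left]
    exact neg_mem hb

include hdd hL in
/-- connecting map piece -/
theorem HH_connect (x : C) (π : M →ₗ[C] M'') (hπ : Surjective π)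
    (hx : Injective (LinearMap.lsmul C M x)) (he : Exact (LinearMap.lsmul C M x) π) (n : ℕ) 
    (y : L n ⊗[C] M) (hy : π.lTensor (L n) y ∈ BB L d M'' n) (z : L (n + 1) ⊗[C] M)
    (hz : (d n).rTensor M y = x • z) : z ∈ BB L d M (n + 1) := by
  have hinj : ∀ k, Injective ((LinearMap.lsmul C M x).lTensor (L k)) := fun k =>
    Module.Flat.lTensor_preserves_injective_linearMap _ hx
  have hsm : ∀ k (t : L k ⊗[C] M), (LinearMap.lsmul C M x).lTensor (L k) t = x • t := by
    intro k t
    have : LinearMap.lsmul C M x = x • LinearMap.id := by ext; simp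
    rw [this, LinearMap.lTensor_smul, LinearMap.lTensor_id]; rfl
  obtain ⟨b, hb, hzb⟩ : ∃ b ∈ BB L d M n, π.lTensor (L n) y = π.lTensor (L n) b := by
    cases n with
    | zero => exact ⟨0, zero_mem _, by rw [map_zero]; exact hy⟩
    | succ n =>
      obtain ⟨y', hy'⟩ := hy
      obtain ⟨y', rfl⟩ := LinearMap.lTensor_surjective (L n) hπ y'
      exact ⟨(d n).rTensor M y', ⟨y', rfl⟩, by rw [← d_lTensor, hy']⟩
  have : π.lTensor (L n) (y - b) = 0 := by rw [map_sub, hzb, sub_self]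
  obtain ⟨t, ht⟩ := (lTensor_exact _ he hπ _).1 this
  refine ⟨t, ?_⟩
  apply hinj
  rw [← d_lTensor, ht, map_sub, hz, hsm]
  have := BB_le_ZZ hdd n hb
  rw [ZZ, LinearMap.mem_ker] at this
  rw [this, sub_zero]

include hdd hL in
theorem HH_vanish_step (x : C) (π : M →ₗ[C] M'') (hπ : Surjective π)
    (hx : Injective (LinearMap.lsmul C M x)) (he : Exact (LinearMap.lsmul C M x) π)
    (htors : ∀ n, ∀ z ∈ ZZ L d M n, ∃ N : ℕ, x ^ N • z ∈ BB L d M n) (n : ℕ)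
    (hv : ∀ k < n, ZZ L d M'' k ≤ BB L d M'' k) :
    ∀ k < n + 1, ZZ L d M k ≤ BB L d M k := by
  have hinj : ∀ k, Injective ((LinearMap.lsmul C M x).lTensor (L k)) := fun k =>
    Module.Flat.lTensor_preserves_injective_linearMap _ hx
  have hsm : ∀ k (t : L k ⊗[C] M), (LinearMap.lsmul C M x).lTensor (L k) t = x • t := by
    intro k t
    have : LinearMap.lsmul C M x = x • LinearMap.id := by ext; simp
    rw [this, LinearMap.lTensor_smul, LinearMap.lTensor_id]; rfl
  intro k hk
  have step : ∀ z ∈ ZZ L d M k, x • z ∈ BB L d M k → z ∈ BB L d M k := by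
    intro z hz hxz
    cases k with
    | zero =>
      rw [BB, Submodule.mem_bot] at hxz ⊢
      apply hinj
      rw [hsm, hxz, map_zero]
    | succ k =>
      obtain ⟨y, hy⟩ := hxz
      refine HH_connect hdd x π hπ hx he k y (hv k (by omega) ?_) z hy
      rw [ZZ, LinearMap.mem_ker, d_lTensor, hy, ← hsm]
      exact (lTensor_exact _ he hπ).apply_apply_eq_zero z
  intro z hz
  obtain ⟨N, hN⟩ := htors k z hz
  induction N with
  | zero => simpa using hN
  | succ N ih =>
    apply ih
    apply step _ (Submodule.smul_mem _ _ hz)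
    rwa [smul_smul, ← pow_succ']

include hdd hL in
theorem HH_artinian_step (x : C) (π : M →ₗ[C] M'') (hπ : Surjective π)
    (hx : Injective (LinearMap.lsmul C M x)) (he : Exact (LinearMap.lsmul C M x) π)
    (htors : ∀ n, ∀ z ∈ ZZ L d M n, ∃ N : ℕ, x ^ N • z ∈ BB L d M n) (n : ℕ)
    (hv : IsArtinian C (HH L d M'' n)) : IsArtinian C (HH L d M (n + 1)) := by
  have hinj : ∀ k, Injective ((LinearMap.lsmul C M x).lTensor (L k)) := fun k =>
    Module.Flat.lTensor_preserves_injective_linearMap _ hx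
  have hsm : ∀ k (t : L k ⊗[C] M), (LinearMap.lsmul C M x).lTensor (L k) t = x • t := by
    intro k t
    have : LinearMap.lsmul C M x = x • LinearMap.id := by ext; simp
    rw [this, LinearMap.lTensor_smul, LinearMap.lTensor_id]; rfl
  apply artinian_of_torsion x
  · intro h
    obtain ⟨z, rfl⟩ := Submodule.Quotient.mk_surjective _ h
    obtain ⟨N, hN⟩ := htors _ z.1 z.2
    exact ⟨N, (HH_mk_eq_zero (x ^ N • z)).2 hN⟩
  -- Y = pairs (y, z) with d y = x z
  let Y : Submodule C ((L n ⊗[C] M) × (L (n + 1) ⊗[C] M)) :=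
    LinearMap.eqLocus ((d n).rTensor M ∘ₗ LinearMap.fst C _ _)
      (x • LinearMap.snd C (L n ⊗[C] M) (L (n + 1) ⊗[C] M))
  have hY : ∀ y : Y, (d n).rTensor M y.1.1 = x • y.1.2 := fun y => y.2
  have hY1 : ∀ y : Y, π.lTensor (L n) y.1.1 ∈ ZZ L d M'' n := by
    intro y
    rw [ZZ, LinearMap.mem_ker, d_lTensor, hY, ← hsm]
    exact (lTensor_exact _ he hπ).apply_apply_eq_zero _
  have hY2 : ∀ y : Y, y.1.2 ∈ ZZ L d M (n + 1) := by
    intro y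
    rw [ZZ, LinearMap.mem_ker]
    apply hinj
    rw [hsm, map_zero, ← map_smul, ← hY]
    exact dd_rTensor hdd n _
  let φ : Y →ₗ[C] HH L d M'' n := (Submodule.mkQ _) ∘ₗ
    LinearMap.codRestrict (ZZ L d M'' n) (π.lTensor (L n) ∘ₗ LinearMap.fst C _ _ ∘ₗ Y.subtype) hY1
  let ψ : Y →ₗ[C] HH L d M (n + 1) := (Submodule.mkQ _) ∘ₗ
    LinearMap.codRestrict (ZZ L d M (n + 1)) (LinearMap.snd C _ _ ∘ₗ Y.subtype) hY2
  have hk : LinearMap.ker φ ≤ LinearMap.ker ψ := by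
    intro y hy
    have h1 : π.lTensor (L n) y.1.1 ∈ BB L d M'' n :=
      (HH_mk_eq_zero (⟨_, hY1 y⟩ : ZZ L d M'' n)).1 hy
    exact (HH_mk_eq_zero (⟨_, hY2 y⟩ : ZZ L d M (n + 1))).2
      (HH_connect hdd x π hπ hx he n y.1.1 h1 y.1.2 (hY y))
  have a1 : IsArtinian C (Y ⧸ LinearMap.ker φ) :=
    isArtinian_of_injective ((LinearMap.ker φ).liftQ φ le_rfl)
      (LinearMap.ker_eq_bot.1 (Submodule.ker_liftQ_eq_bot _ _ _ le_rfl))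
  have a2 : IsArtinian C (LinearMap.range ((LinearMap.ker φ).liftQ ψ hk)) := isArtinian_range _
  refine isArtinian_of_le (M := HH L d M (n + 1)) (t := LinearMap.range ((LinearMap.ker φ).liftQ ψ hk)) ?_
  intro h hh
  rw [Submodule.range_liftQ]
  obtain ⟨z, rfl⟩ := Submodule.Quotient.mk_surjective _ h
  have h1 : x • z.1 ∈ BB L d M (n + 1) := (HH_mk_eq_zero (x • z)).1 hh
  obtain ⟨y, hy⟩ := h1
  exact ⟨⟨(y, z.1), hy⟩, rfl⟩


include hdd hL in
theorem HH_artinian [IsNoetherianRing C] [IsLocalRing C]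
    (htors : ∀ (M : Type) [AddCommGroup M] [Module C M] (n : ℕ), ∀ z ∈ ZZ L d M n,
      ∀ x ∈ maximalIdeal C, ∃ N : ℕ, x ^ N • z ∈ BB L d M n)
    (hκ : ∀ n, IsArtinian C (L n ⊗[C] (C ⧸ maximalIdeal C))) (n : ℕ) :
    ∀ (M : Type) [AddCommGroup M] [Module C M], Module.Finite C M → IsArtinian C (HH L d M n) := by
  induction n with
  | zero =>
    intro M _ _ hM
    induction hM using IsNoetherianRing.induction_on_isQuotientEquivQuotientPrime C with
    | subsingleton N => infer_instance
    | quotient N p f =>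
      by_cases hp : p.1 = maximalIdeal C
      · have : IsArtinian C (L 0 ⊗[C] N) :=
          isArtinian_of_linearEquiv (LinearEquiv.lTensor (L 0)
            (f.trans (Submodule.quotEquivOfEq _ _ hp))).symm
        infer_instance
      · obtain ⟨x, hxm, hxp⟩ : ∃ x ∈ maximalIdeal C, x ∉ p.1 := by
          by_contra! hc
          exact hp ((maximalIdeal.isMaximal C).eq_of_le p.2.ne_top hc).symm
        have hx : Injective (LinearMap.lsmul C N x) := by
          rw [injective_iff_map_eq_zero]
          intro a ha
          apply f.injective
          rw [map_zero]
          replace ha := congrArg f ha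
          rw [LinearMap.lsmul_apply, map_smul, map_zero] at ha
          obtain ⟨b, hb⟩ := Ideal.Quotient.mk_surjective (f a)
          rw [← hb] at ha ⊢
          replace ha : Ideal.Quotient.mk p.1 (x * b) = 0 := ha
          rw [Ideal.Quotient.eq_zero_iff_mem] at ha ⊢
          exact (p.2.mem_or_mem ha).resolve_left hxp
        have := HH_vanish_step hdd x (LinearMap.range (LinearMap.lsmul C N x)).mkQ
          (Submodule.mkQ_surjective _) hx (LinearMap.exact_map_mkQ_range _)
          (fun n z hz => htors N n z hz x hxm) 0 (by simp) 0 (by simp)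
        have hs : Subsingleton (HH L d N 0) := by
          refine ⟨fun a b => ?_⟩
          obtain ⟨a, rfl⟩ := Submodule.Quotient.mk_surjective _ a
          obtain ⟨b, rfl⟩ := Submodule.Quotient.mk_surjective _ b
          rw [(HH_mk_eq_zero a).2 (this a.2), (HH_mk_eq_zero b).2 (this b.2)]
        infer_instance
    | exact N₁ N₂ N₃ f g hf hg he h1 h3 => exact HH_artinian_of_exact f hdd g hf hg he 0 h1 h3
  | succ n ih =>
    intro M _ _ hM
    induction hM using IsNoetherianRing.induction_on_isQuotientEquivQuotientPrime C with
    | subsingleton N => infer_instance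
    | quotient N p f =>
      by_cases hp : p.1 = maximalIdeal C
      · have : IsArtinian C (L (n + 1) ⊗[C] N) :=
          isArtinian_of_linearEquiv (LinearEquiv.lTensor (L (n + 1))
            (f.trans (Submodule.quotEquivOfEq _ _ hp))).symm
        infer_instance
      · obtain ⟨x, hxm, hxp⟩ : ∃ x ∈ maximalIdeal C, x ∉ p.1 := by
          by_contra! hc
          exact hp ((maximalIdeal.isMaximal C).eq_of_le p.2.ne_top hc).symm
        have hx : Injective (LinearMap.lsmul C N x) := by
          rw [injective_iff_map_eq_zero]
          intro a ha
          apply f.injective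
          rw [map_zero]
          replace ha := congrArg f ha
          rw [LinearMap.lsmul_apply, map_smul, map_zero] at ha
          obtain ⟨b, hb⟩ := Ideal.Quotient.mk_surjective (f a)
          rw [← hb] at ha ⊢
          replace ha : Ideal.Quotient.mk p.1 (x * b) = 0 := ha
          rw [Ideal.Quotient.eq_zero_iff_mem] at ha ⊢
          exact (p.2.mem_or_mem ha).resolve_left hxp
        exact HH_artinian_step hdd x (LinearMap.range (LinearMap.lsmul C N x)).mkQ
          (Submodule.mkQ_surjective _) hx (LinearMap.exact_map_mkQ_range _)
          (fun n z hz => htors N n z hz x hxm) n (ih _ inferInstance)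
    | exact N₁ N₂ N₃ f g hf hg he h1 h3 =>
      exact HH_artinian_of_exact f hdd g hf hg he _ h1 h3

theorem HH_vanish_congr (e : M' ≃ₗ[C] M) (n : ℕ) (h : ZZ L d M n ≤ BB L d M n) :
    ZZ L d M' n ≤ BB L d M' n := by
  intro z hz
  have h1 := BB_map e.symm.toLinearMap (h (ZZ_map e.toLinearMap hz))
  rw [← LinearMap.comp_apply, ← LinearMap.lTensor_comp] at h1
  simpa using h1

include hdd hL in
theorem HH_vanish_reg [IsLocalRing C]
    (htors : ∀ (M : Type) [AddCommGroup M] [Module C M] (n : ℕ), ∀ z ∈ ZZ L d M n,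
      ∀ x ∈ maximalIdeal C, ∃ N : ℕ, x ^ N • z ∈ BB L d M n) {δ : ℕ} {I : Ideal C}
    (hI : Reg C δ I) : ∀ (_ : I ≤ maximalIdeal C) (k : ℕ)
    (_ : ∀ n < k, ZZ L d (C ⧸ I) n ≤ BB L d (C ⧸ I) n),
    ∀ n < k + δ, ZZ L d C n ≤ BB L d C n := by
  induction hI with
  | zero =>
    intro _ k hk n hn
    exact HH_vanish_congr (Submodule.quotEquivOfEqBot (⊥ : Ideal C) rfl).symm n (hk n hn)
  | succ j I w hI hw ih =>
    intro hIm k hk n hn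
    refine ih (le_sup_left.trans hIm) (k + 1) ?_ n (by omega)
    let π : (C ⧸ I) →ₗ[C] (C ⧸ (I ⊔ Ideal.span {w})) := Submodule.factor le_sup_left
    have hm : Injective (LinearMap.lsmul C (C ⧸ I) w) := by
      rw [injective_iff_map_eq_zero]
      intro a ha
      obtain ⟨a, rfl⟩ := Ideal.Quotient.mk_surjective a
      have : Ideal.Quotient.mk I (w * a) = 0 := ha
      rw [Ideal.Quotient.eq_zero_iff_mem] at this ⊢
      exact hw a this
    have hπs : Surjective π := Submodule.factor_surjective le_sup_left
    exact HH_vanish_step hdd w π hπs hm (reg_exact I w) (fun n z hz => htors _ n z hz w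
      (hIm (Ideal.mem_sup_right (Ideal.mem_span_singleton_self w)))) k hk

include hdd hL in
theorem HH_vanish_pi (r n : ℕ) (h : ZZ L d C n ≤ BB L d C n) :
    ZZ L d (Fin r → C) n ≤ BB L d (Fin r → C) n := by
  intro z hz
  have hz' : z = ∑ i : Fin r, (LinearMap.single C (fun _ : Fin r => C) i).lTensor (L n)
      ((LinearMap.proj i : (Fin r → C) →ₗ[C] C).lTensor (L n) z) := by
    simp_rw [← LinearMap.comp_apply, ← LinearMap.lTensor_comp]
    rw [← LinearMap.sum_apply]
    have : ∑ i : Fin r, ((LinearMap.single C (fun _ : Fin r => C) i) ∘ₗ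
        (LinearMap.proj i : (Fin r → C) →ₗ[C] C)) = LinearMap.id := by
      ext i j
      simp [LinearMap.sum_apply, Pi.single_apply]
    conv_lhs => rw [← LinearMap.id_apply (R := C) z, ← LinearMap.lTensor_id, ← this]
    rw [← LinearMap.coe_lTensorHom, map_sum]
  rw [hz']
  exact sum_mem fun i _ => BB_map _ (h (ZZ_map _ hz))

end
end Cplx

open IsLocalRing TensorProduct
set_option synthInstance.maxHeartbeats 1000000
set_option maxHeartbeats 1000000

set_option linter.unusedSectionVars false
section LocV
variable {C K V : Type} [CommRing C] [Field K] [Algebra C K] [AddCommGroup V] [Module K V]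
  [Module C V] [IsScalarTower C K V]

def locV (x : C) (W : Submodule C V) : Submodule C V where
  carrier := {k | ∃ N : ℕ, x ^ N • k ∈ W}
  zero_mem' := ⟨0, by simp⟩
  add_mem' := by
    rintro a b ⟨N, hN⟩ ⟨M, hM⟩
    refine ⟨N + M, ?_⟩
    rw [smul_add]
    refine add_mem ?_ ?_
    · rw [pow_add, mul_comm, mul_smul]; exact W.smul_mem _ hN
    · rw [pow_add, mul_smul]; exact W.smul_mem _ hM
  smul_mem' := by
    rintro c a ⟨N, hN⟩
    refine ⟨N, ?_⟩
    rw [smul_comm]; exact W.smul_mem _ hN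

theorem mem_locV {x : C} {W : Submodule C V} {k : V} : k ∈ locV x W ↔ ∃ N : ℕ, x ^ N • k ∈ W :=
  Iff.rfl

theorem le_locV (x : C) (W : Submodule C V) : W ≤ locV x W := fun k hk => ⟨0, by simpa using hk⟩

theorem pow_smul_mem_of_le {x : C} {W : Submodule C V} {k : V} {N M : ℕ} (h : N ≤ M)
    (hk : x ^ N • k ∈ W) : x ^ M • k ∈ W := by
  rw [← Nat.sub_add_cancel h, pow_add, mul_smul]; exact W.smul_mem _ hk

theorem locV_isLocalized (x : C) (hx : algebraMap C K x ≠ 0) (W : Submodule C V) :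
    IsLocalizedModule (Submonoid.powers x) (Submodule.inclusion (le_locV x W)) where
  map_units := by
    rintro ⟨_, n, rfl⟩
    have hxn : algebraMap C K (x ^ n) ≠ 0 := by rw [map_pow]; exact pow_ne_zero _ hx
    rw [Module.End.isUnit_iff]
    constructor
    · intro a b hab
      have : x ^ n • a.1 = x ^ n • b.1 := congrArg Subtype.val hab
      rw [← algebraMap_smul K (x ^ n) a.1, ← algebraMap_smul K (x ^ n) b.1] at this
      exact Subtype.ext (smul_right_injective V hxn this)
    · rintro ⟨b, N, hb⟩
      have e : x ^ n • ((algebraMap C K (x ^ n))⁻¹ • b) = b := by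
        rw [← algebraMap_smul K, smul_smul, mul_inv_cancel₀ hxn, one_smul]
      refine ⟨⟨(algebraMap C K (x ^ n))⁻¹ • b, N + n, ?_⟩, Subtype.ext e⟩
      rw [pow_add, mul_smul, e]; exact hb
  surj := by
    rintro ⟨b, N, hb⟩
    exact ⟨(⟨_, hb⟩, ⟨x ^ N, N, rfl⟩), rfl⟩
  exists_of_eq := by
    intro a b hab
    exact ⟨1, by rw [Submodule.inclusion_injective _ hab]⟩

theorem flat_localizedModule {M M' : Type} [AddCommGroup M] [Module C M] [AddCommGroup M']
    [Module C M'] (S : Submonoid C) (f : M →ₗ[C] M') [IsLocalizedModule S f] [Module.Flat C M] :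
    Module.Flat C M' := by
  have : Module.Flat C (Localization S) := IsLocalization.flat _ S
  have : Module.Flat C (LocalizedModule S M) := Module.Flat.trans C (Localization S) _
  exact Module.Flat.of_linearEquiv (IsLocalizedModule.iso S f).symm

theorem flat_of_localized {M M' : Type} [AddCommGroup M] [Module C M] [AddCommGroup M']
    [Module C M'] (S : Submonoid C) (f : M →ₗ[C] M') [IsLocalizedModule S f]
    [Module.Flat C (LocalizedModule S M)] : Module.Flat C M' :=
  Module.Flat.of_linearEquiv (IsLocalizedModule.iso S f).symm

theorem flat_locV (x : C) (hx : algebraMap C K x ≠ 0) (W : Submodule C V) [Module.Flat C W] :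
    Module.Flat C (locV x W) :=
  have := locV_isLocalized (K := K) x hx W
  flat_localizedModule (Submonoid.powers x) (Submodule.inclusion (le_locV x W))

end LocV

section Cech
open Function
variable {C K ι : Type} [CommRing C] [Field K] [Algebra C K] (g : ι → C)

def PP {n : ℕ} (σ : Fin n → ι) : C := ∏ j, g (σ j)

def LL (M : Submodule C K) (n : ℕ) : Submodule C ((Fin n → ι) → K) where
  carrier := {f | ∀ σ, f σ ∈ locV (PP g σ) M}
  zero_mem' := fun _ => zero_mem _
  add_mem' := fun ha hb σ => add_mem (ha σ) (hb σ)
  smul_mem' := fun c _ ha σ => Submodule.smul_mem _ c (ha σ)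

theorem mem_LL {M : Submodule C K} {n : ℕ} {f : (Fin n → ι) → K} :
    f ∈ LL g M n ↔ ∀ σ, f σ ∈ locV (PP g σ) M := Iff.rfl

def LLequiv (M : Submodule C K) (n : ℕ) :
    LL g M n ≃ₗ[C] (∀ σ : Fin n → ι, locV (PP g σ) M) where
  toFun f σ := ⟨f.1 σ, f.2 σ⟩
  invFun f := ⟨fun σ => (f σ).1, fun σ => (f σ).2⟩
  left_inv _ := rfl
  right_inv _ := rfl
  map_add' _ _ := rfl
  map_smul' _ _ := rfl

theorem flat_pi {J : Type} [Finite J] {M : J → Type} [∀ j, AddCommGroup (M j)]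
    [∀ j, Module C (M j)] [∀ j, Module.Flat C (M j)] : Module.Flat C (∀ j, M j) := by
  classical
  have := Fintype.ofFinite J
  exact Module.Flat.of_linearEquiv (DirectSum.linearEquivFunOnFintype C J M).symm

theorem flat_LL [Finite ι] (M : Submodule C K) (n : ℕ)
    (h : ∀ σ : Fin n → ι, Module.Flat C (locV (PP g σ) M)) : Module.Flat C (LL g M n) := by
  have := flat_pi (C := C) (M := fun σ : Fin n → ι => locV (PP g σ) M)
  exact Module.Flat.of_linearEquiv (LLequiv g M n)

variable (C K ι) in
noncomputable def dK (n : ℕ) : ((Fin n → ι) → K) →ₗ[C] ((Fin (n + 1) → ι) → K) :=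
  ∑ i : Fin (n + 1), ((-1 : C) ^ (i : ℕ)) •
    LinearMap.funLeft C K (fun σ : Fin (n + 1) → ι => σ ∘ i.succAbove)

theorem dK_apply (n : ℕ) (f : (Fin n → ι) → K) (σ : Fin (n + 1) → ι) :
    dK C K ι n f σ = ∑ i : Fin (n + 1), (-1 : K) ^ (i : ℕ) * f (σ ∘ i.succAbove) := by
  simp [dK, LinearMap.sum_apply, Finset.sum_apply, LinearMap.funLeft_apply, Algebra.smul_def]

variable (C K) in
noncomputable def sK (a : ι) (n : ℕ) : ((Fin (n + 1) → ι) → K) →ₗ[C] ((Fin n → ι) → K) :=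
  LinearMap.funLeft C K (fun τ : Fin n → ι => Fin.cons a τ)

theorem sK_apply (a : ι) (n : ℕ) (f : (Fin (n + 1) → ι) → K) (τ : Fin n → ι) :
    sK C K a n f τ = f (Fin.cons a τ) := rfl

theorem s_d (a : ι) (n : ℕ) (f : (Fin (n + 1) → ι) → K) :
    sK C K a (n + 1) (dK C K ι (n + 1) f) = f - dK C K ι n (sK C K a n f) := by
  ext τ
  rw [sK_apply, dK_apply, Fin.sum_univ_succ, Pi.sub_apply, dK_apply, sub_eq_add_neg,
    ← Finset.sum_neg_distrib]
  congr 1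
  · simp only [Fin.val_zero, pow_zero, one_mul]
    congr 1
  · refine Finset.sum_congr rfl fun i _ => ?_
    rw [sK_apply, Fin.val_succ, pow_succ, mul_neg_one, neg_mul]
    congr 3
    ext j
    refine Fin.cases ?_ (fun j => ?_) j
    · simp
    · simp

theorem s_d0 (a : ι) (f : (Fin 0 → ι) → K) : sK C K a 0 (dK C K ι 0 f) = f := by
  ext τ
  rw [sK_apply, dK_apply]
  simp

theorem dd_K (n : ℕ) (f : (Fin n → ι) → K) : dK C K ι (n + 1) (dK C K ι n f) = 0 := by
  induction n with
  | zero =>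
    ext σ
    have : σ = Fin.cons (σ 0) (Fin.tail σ) := (Fin.cons_self_tail σ).symm
    rw [this]
    change sK C K (σ 0) _ (dK C K ι 1 (dK C K ι 0 f)) _ = _
    rw [s_d, s_d0, sub_self]; rfl
  | succ n ih =>
    ext σ
    have : σ = Fin.cons (σ 0) (Fin.tail σ) := (Fin.cons_self_tail σ).symm
    rw [this]
    change sK C K (σ 0) _ (dK C K ι (n + 1 + 1) (dK C K ι (n + 1) f)) _ = _
    rw [s_d, s_d, map_sub, ih, sub_zero, sub_self]; rfl

theorem PP_succAbove {n : ℕ} (σ : Fin (n + 1) → ι) (i : Fin (n + 1)) :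
    PP g σ = g (σ i) * PP g (σ ∘ i.succAbove) := by
  rw [PP, Fin.prod_univ_succAbove _ i]; rfl

theorem PP_cons {n : ℕ} (a : ι) (τ : Fin n → ι) :
    PP g (Fin.cons a τ : Fin (n + 1) → ι) = g a * PP g τ := by
  rw [PP, Fin.prod_univ_succ]; rfl

theorem dK_mem (M : Submodule C K) {n : ℕ} {f : (Fin n → ι) → K} (hf : f ∈ LL g M n) :
    dK C K ι n f ∈ LL g M (n + 1) := by
  rw [dK, LinearMap.sum_apply]
  refine sum_mem fun i _ => Submodule.smul_mem _ _ ?_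
  intro σ
  obtain ⟨N, hN⟩ := hf (σ ∘ i.succAbove)
  refine ⟨N, ?_⟩
  rw [PP_succAbove g σ i, mul_pow, mul_smul]
  exact M.smul_mem _ hN

noncomputable def dL (M : Submodule C K) (n : ℕ) : LL g M n →ₗ[C] LL g M (n + 1) :=
  (dK C K ι n).restrict fun _ hf => dK_mem g M hf

theorem dL_dL (M : Submodule C K) (n : ℕ) : dL g M (n + 1) ∘ₗ dL g M n = 0 := by
  ext1 f
  exact Subtype.ext (dd_K n f.1)

theorem exists_sK_mem [Finite ι] (M : Submodule C K) (a : ι) {n : ℕ} {f : (Fin (n + 1) → ι) → K}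
    (hf : f ∈ LL g M (n + 1)) : sK C K a n f ∈ locV (g a) (LL g M n) := by
  have := Fintype.ofFinite (Fin (n + 1) → ι)
  choose N hN using hf
  refine ⟨Finset.univ.sup N, fun τ => ⟨N (Fin.cons a τ), ?_⟩⟩
  have h1 := hN (Fin.cons a τ)
  rw [PP_cons, mul_pow, mul_comm, mul_smul, smul_comm] at h1
  have := pow_smul_mem_of_le (Finset.le_sup (Finset.mem_univ (Fin.cons a τ : Fin (n+1) → ι))) h1
  rw [smul_comm] at this
  exact this

section Tors
variable (M₀ : Submodule C K)

theorem dK_mem_loc (a : ι) {n : ℕ} {f : (Fin n → ι) → K} (hf : f ∈ locV (g a) (LL g M₀ n)) :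
    dK C K ι n f ∈ locV (g a) (LL g M₀ (n + 1)) := by
  obtain ⟨N, hN⟩ := hf
  exact ⟨N, by rw [← map_smul]; exact dK_mem g M₀ hN⟩

theorem sK_mem_loc [Finite ι] (a : ι) {n : ℕ} {f : (Fin (n + 1) → ι) → K}
    (hf : f ∈ locV (g a) (LL g M₀ (n + 1))) : sK C K a n f ∈ locV (g a) (LL g M₀ n) := by
  obtain ⟨N, hN⟩ := hf
  obtain ⟨N', hN'⟩ := exists_sK_mem g M₀ a hN
  exact ⟨N' + N, by rw [pow_add, mul_smul, ← map_smul]; exact hN'⟩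

noncomputable def dL' (a : ι) (n : ℕ) :
    locV (g a) (LL g M₀ n) →ₗ[C] locV (g a) (LL g M₀ (n + 1)) :=
  (dK C K ι n).restrict fun _ hf => dK_mem_loc g M₀ a hf

noncomputable def sL' [Finite ι] (a : ι) (n : ℕ) :
    locV (g a) (LL g M₀ (n + 1)) →ₗ[C] locV (g a) (LL g M₀ n) :=
  (sK C K a n).restrict fun _ hf => sK_mem_loc g M₀ a hf

theorem tors_one [Finite ι] (hg : ∀ i, algebraMap C K (g i) ≠ 0) (M : Type) [AddCommGroup M]
    [Module C M] (n : ℕ) (z : LL g M₀ n ⊗[C] M)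
    (hz : z ∈ ZZ (fun n => LL g M₀ n) (dL g M₀) M n) (a : ι) :
    ∃ N : ℕ, g a ^ N • z ∈ BB (fun n => LL g M₀ n) (dL g M₀) M n := by
  let inc : ∀ n, LL g M₀ n →ₗ[C] locV (g a) (LL g M₀ n) := fun n =>
    Submodule.inclusion (le_locV (g a) (LL g M₀ n))
  have hloc : ∀ n, IsLocalizedModule (Submonoid.powers (g a)) ((inc n).rTensor M) := by
    intro n
    have := locV_isLocalized (K := K) (g a) (hg a) (LL g M₀ n)
    exact IsLocalizedModule.rTensor (R := C) (A := C) (Submonoid.powers (g a)) (inc n)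
  have hker : ∀ n (t : LL g M₀ n ⊗[C] M), (inc n).rTensor M t = 0 → ∃ N : ℕ, g a ^ N • t = 0 := by
    intro n t ht
    obtain ⟨⟨_, N, rfl⟩, hc⟩ := (hloc n).exists_of_eq (x₁ := t) (x₂ := 0) (by rw [ht, map_zero])
    exact ⟨N, by rw [smul_zero] at hc; exact hc⟩
  have hdi : ∀ n (t : LL g M₀ n ⊗[C] M), (dL' g M₀ a n).rTensor M ((inc n).rTensor M t) =
      (inc (n + 1)).rTensor M ((dL g M₀ n).rTensor M t) := by
    intro n t
    rw [← LinearMap.comp_apply, ← LinearMap.comp_apply, ← LinearMap.rTensor_comp,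
      ← LinearMap.rTensor_comp]
    rfl
  rw [ZZ, LinearMap.mem_ker] at hz
  have hz' : (dL' g M₀ a n).rTensor M ((inc n).rTensor M z) = 0 := by rw [hdi, hz, map_zero]
  cases n with
  | zero =>
    have e : sL' g M₀ a 0 ∘ₗ dL' g M₀ a 0 = LinearMap.id := by
      ext1 f; exact Subtype.ext (s_d0 a f.1)
    have : (inc 0).rTensor M z = 0 := by
      have := congrArg ((sL' g M₀ a 0).rTensor M) hz'
      rw [← LinearMap.comp_apply, ← LinearMap.rTensor_comp, e] at this
      simpa using this
    obtain ⟨N, hN⟩ := hker 0 z this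
    exact ⟨N, by rw [hN]; exact zero_mem _⟩
  | succ n =>
    have e : LinearMap.id = dL' g M₀ a n ∘ₗ sL' g M₀ a n +
        sL' g M₀ a (n + 1) ∘ₗ dL' g M₀ a (n + 1) := by
      ext1 f
      apply Subtype.ext
      change f.1 = dK C K ι n (sK C K a n f.1) + sK C K a (n + 1) (dK C K ι (n + 1) f.1)
      rw [s_d]; abel
    have h1 : (inc (n + 1)).rTensor M z =
        (dL' g M₀ a n).rTensor M ((sL' g M₀ a n).rTensor M ((inc (n + 1)).rTensor M z)) := by
      conv_lhs => rw [← LinearMap.id_apply (R := C) ((inc (n + 1)).rTensor M z),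
        ← LinearMap.rTensor_id, e]
      rw [LinearMap.rTensor_add, LinearMap.rTensor_comp, LinearMap.rTensor_comp,
        LinearMap.add_apply, LinearMap.comp_apply, LinearMap.comp_apply, hz', map_zero, add_zero]
    obtain ⟨⟨u, ⟨_, N, rfl⟩⟩, hu⟩ := (hloc n).surj
      ((sL' g M₀ a n).rTensor M ((inc (n + 1)).rTensor M z))
    have hu' : g a ^ N • ((sL' g M₀ a n).rTensor M ((inc (n + 1)).rTensor M z)) =
      (inc n).rTensor M u := hu
    have h2 : (inc (n + 1)).rTensor M (g a ^ N • z - (dL g M₀ n).rTensor M u) = 0 := by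
      rw [map_sub, map_smul, ← hdi, ← hu', map_smul, ← h1, sub_self]
    obtain ⟨N', hN'⟩ := hker _ _ h2
    refine ⟨N' + N, g a ^ N' • u, ?_⟩
    rw [smul_sub, sub_eq_zero] at hN'
    rw [map_smul, pow_add, mul_smul]
    exact hN'.symm

theorem tors_all [Finite ι] [IsLocalRing C] (hg : ∀ i, algebraMap C K (g i) ≠ 0)
    (hm : Ideal.span (Set.range g) = maximalIdeal C) (M : Type) [AddCommGroup M]
    [Module C M] (n : ℕ) (z : LL g M₀ n ⊗[C] M)
    (hz : z ∈ ZZ (fun n => LL g M₀ n) (dL g M₀) M n) (x : C) (hx : x ∈ maximalIdeal C) :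
    ∃ N : ℕ, x ^ N • z ∈ BB (fun n => LL g M₀ n) (dL g M₀) M n := by
  let J : Ideal C := Submodule.comap (LinearMap.toSpanSingleton C _ z)
    (BB (fun n => LL g M₀ n) (dL g M₀) M n)
  have : maximalIdeal C ≤ J.radical := by
    rw [← hm, Ideal.span_le]
    rintro _ ⟨a, rfl⟩
    exact tors_one g M₀ hg M n z hz a
  exact this hx
end Tors

section Theta
variable [Finite ι]

/-- The element `single σ (P σ)⁻ᴺ`. -/
noncomputable def eL [DecidableEq ι] {n : ℕ} (hg : ∀ i, algebraMap C K (g i) ≠ 0)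
    (σ : Fin n → ι) (N : ℕ) : LL g (1 : Submodule C K) n :=
  ⟨Pi.single σ ((algebraMap C K (PP g σ ^ N))⁻¹), by
    intro τ
    by_cases h : τ = σ
    · subst h
      refine ⟨N, Submodule.mem_one.2 ⟨1, ?_⟩⟩
      rw [Pi.single_eq_same, Algebra.smul_def, mul_inv_cancel₀, map_one]
      rw [map_pow, PP, map_prod]
      exact pow_ne_zero _ (Finset.prod_ne_zero_iff.2 fun j _ => hg _)
    · rw [Pi.single_eq_of_ne h]; exact zero_mem _⟩

theorem PP_ne {n : ℕ} (hg : ∀ i, algebraMap C K (g i) ≠ 0) (σ : Fin n → ι) (N : ℕ) :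
    algebraMap C K (PP g σ ^ N) ≠ 0 := by
  rw [map_pow, PP, map_prod]
  exact pow_ne_zero _ (Finset.prod_ne_zero_iff.2 fun j _ => hg _)

theorem eL_smul [DecidableEq ι] {n : ℕ} (hg : ∀ i, algebraMap C K (g i) ≠ 0)
    (σ : Fin n → ι) (N k : ℕ) : eL g hg σ N = PP g σ ^ k • eL g hg σ (N + k) := by
  apply Subtype.ext
  ext τ
  change (Pi.single σ ((algebraMap C K (PP g σ ^ N))⁻¹) : (Fin n → ι) → K) τ =
    PP g σ ^ k • (Pi.single σ ((algebraMap C K (PP g σ ^ (N + k)))⁻¹) : (Fin n → ι) → K) τ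
  by_cases h : τ = σ
  · subst h
    rw [Pi.single_eq_same, Pi.single_eq_same, Algebra.smul_def, pow_add, map_mul]
    have := PP_ne g hg τ N
    have := PP_ne g hg τ k
    field_simp
  · rw [Pi.single_eq_of_ne h, Pi.single_eq_of_ne h, smul_zero]

theorem LL_normal [DecidableEq ι] [Fintype ι] {n : ℕ} (hg : ∀ i, algebraMap C K (g i) ≠ 0)
    (f : LL g (1 : Submodule C K) n) : ∃ N, ∃ c : (Fin n → ι) → C,
    f = ∑ σ, c σ • eL g hg σ N := by
  have h := f.2
  choose N hN using h
  let N0 := Finset.univ.sup N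
  have h2 : ∀ σ, ∃ c : C, algebraMap C K c = PP g σ ^ N0 • f.1 σ := fun σ =>
    Submodule.mem_one.1 (pow_smul_mem_of_le (Finset.le_sup (Finset.mem_univ σ)) (hN σ))
  choose c hc using h2
  refine ⟨N0, c, Subtype.ext ?_⟩
  rw [AddSubmonoidClass.coe_finsetSum]
  ext τ
  rw [Finset.sum_apply, Finset.sum_eq_single τ]
  · change f.1 τ = c τ • (Pi.single τ ((algebraMap C K (PP g τ ^ N0))⁻¹) : (Fin n → ι) → K) τ
    rw [Pi.single_eq_same, Algebra.smul_def, hc, Algebra.smul_def]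
    have := PP_ne g hg τ N0
    field_simp
  · intro σ _ h
    change c σ • (Pi.single σ ((algebraMap C K (PP g σ ^ N0))⁻¹) : (Fin n → ι) → K) τ = 0
    rw [Pi.single_eq_of_ne h.symm, smul_zero]
  · simp

theorem tensor_normal [DecidableEq ι] [Fintype ι] {n : ℕ} (hg : ∀ i, algebraMap C K (g i) ≠ 0)
    {M : Type} [AddCommGroup M] [Module C M]
    (t : LL g (1 : Submodule C K) n ⊗[C] M) : ∃ N, ∃ m : (Fin n → ι) → M,
    t = ∑ σ, eL g hg σ N ⊗ₜ m σ := by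
  induction t using TensorProduct.induction_on with
  | zero => exact ⟨0, 0, by simp⟩
  | tmul f m =>
    obtain ⟨N, c, rfl⟩ := LL_normal g hg f
    refine ⟨N, fun σ => c σ • m, ?_⟩
    rw [TensorProduct.sum_tmul]
    simp [TensorProduct.smul_tmul]
  | add a b ha hb =>
    obtain ⟨N, m, rfl⟩ := ha
    obtain ⟨N', m', rfl⟩ := hb
    refine ⟨N + N', fun σ => PP g σ ^ N' • m σ + PP g σ ^ N • m' σ, ?_⟩
    rw [← Finset.sum_add_distrib]
    refine Finset.sum_congr rfl fun σ _ => ?_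
    rw [TensorProduct.tmul_add, ← TensorProduct.smul_tmul, ← TensorProduct.smul_tmul,
      ← eL_smul, add_comm N N', ← eL_smul]

noncomputable def theta {M : Type} [AddCommGroup M] [Module C M] (j : M →ₗ[C] K) (n : ℕ) :
    LL g (1 : Submodule C K) n ⊗[C] M →ₗ[C] ((Fin n → ι) → K) :=
  TensorProduct.lift (LinearMap.mk₂ C (fun l m σ => l.1 σ * j m)
    (fun _ _ _ => by ext; simp [add_mul]) (fun _ _ _ => by ext; simp)
    (fun _ _ _ => by ext; simp [mul_add]) (fun _ _ _ => by ext; simp))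

theorem theta_tmul {M : Type} [AddCommGroup M] [Module C M] (j : M →ₗ[C] K) (n : ℕ)
    (l : LL g (1 : Submodule C K) n) (m : M) (σ : Fin n → ι) :
    theta g j n (l ⊗ₜ m) σ = l.1 σ * j m := rfl

theorem theta_d {M : Type} [AddCommGroup M] [Module C M] (j : M →ₗ[C] K) (n : ℕ)
    (t : LL g (1 : Submodule C K) n ⊗[C] M) :
    theta g j (n + 1) ((dL g 1 n).rTensor M t) = dK C K ι n (theta g j n t) := by
  induction t using TensorProduct.induction_on with
  | zero => simp
  | add a b ha hb => simp only [map_add, ha, hb]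
  | tmul l m =>
    ext σ
    rw [LinearMap.rTensor_tmul, theta_tmul, dK_apply]
    change dK C K ι n l.1 σ * j m = _
    rw [dK_apply, Finset.sum_mul]
    refine Finset.sum_congr rfl fun i _ => ?_
    rw [theta_tmul, mul_assoc]

theorem theta_comp {M M' : Type} [AddCommGroup M] [Module C M] [AddCommGroup M'] [Module C M']
    (φ : M' →ₗ[C] M) (j : M →ₗ[C] K) (n : ℕ) (t : LL g (1 : Submodule C K) n ⊗[C] M') :
    theta g j n (φ.lTensor _ t) = theta g (j ∘ₗ φ) n t := by
  induction t using TensorProduct.induction_on with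
  | zero => simp
  | add a b ha hb => simp only [map_add, ha, hb]
  | tmul l m => rfl

theorem theta_mem {M : Type} [AddCommGroup M] [Module C M] (j : M →ₗ[C] K) (n : ℕ)
    (B : Submodule C K) (hj : LinearMap.range j ≤ B)
    (t : LL g (1 : Submodule C K) n ⊗[C] M) : theta g j n t ∈ LL g B n := by
  induction t using TensorProduct.induction_on with
  | zero => rw [map_zero]; exact zero_mem _
  | add a b ha hb => rw [map_add]; exact add_mem ha hb
  | tmul l m =>
    intro σ
    obtain ⟨N, hN⟩ := l.2 σ
    obtain ⟨c, hc⟩ := Submodule.mem_one.1 hN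
    refine ⟨N, ?_⟩
    rw [theta_tmul, ← smul_mul_assoc, ← hc, ← Algebra.smul_def]
    exact B.smul_mem _ (hj ⟨m, rfl⟩)

theorem theta_sum [DecidableEq ι] [Fintype ι] {M : Type} [AddCommGroup M] [Module C M]
    (hg : ∀ i, algebraMap C K (g i) ≠ 0) (j : M →ₗ[C] K) (n : ℕ) (N : ℕ)
    (m : (Fin n → ι) → M) (σ : Fin n → ι) :
    theta g j n (∑ σ, eL g hg σ N ⊗ₜ m σ) σ = (algebraMap C K (PP g σ ^ N))⁻¹ * j (m σ) := by
  rw [map_sum, Finset.sum_apply, Finset.sum_eq_single σ]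
  · rw [theta_tmul]
    change (Pi.single σ ((algebraMap C K (PP g σ ^ N))⁻¹) : (Fin n → ι) → K) σ * _ = _
    rw [Pi.single_eq_same]
  · intro τ _ h
    rw [theta_tmul]
    change (Pi.single τ ((algebraMap C K (PP g τ ^ N))⁻¹) : (Fin n → ι) → K) σ * _ = _
    rw [Pi.single_eq_of_ne h.symm, zero_mul]
  · simp

theorem theta_injective {M : Type} [AddCommGroup M] [Module C M]
    (hg : ∀ i, algebraMap C K (g i) ≠ 0) (j : M →ₗ[C] K) (hj : Injective j) (n : ℕ) :
    Injective (theta g j n) := by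
  classical
  have := Fintype.ofFinite ι
  rw [injective_iff_map_eq_zero]
  intro t ht
  obtain ⟨N, m, rfl⟩ := tensor_normal g hg t
  refine Finset.sum_eq_zero fun σ _ => ?_
  have h := congrFun ht σ
  rw [theta_sum, Pi.zero_apply, mul_eq_zero, or_iff_right (inv_ne_zero (PP_ne g hg σ N))] at h
  rw [hj (h.trans (map_zero j).symm), tmul_zero]

theorem theta_surj {M : Type} [AddCommGroup M] [Module C M]
    (hg : ∀ i, algebraMap C K (g i) ≠ 0) (j : M →ₗ[C] K) (n : ℕ) (f : (Fin n → ι) → K)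
    (hf : f ∈ LL g (LinearMap.range j) n) : ∃ t, theta g j n t = f := by
  classical
  have := Fintype.ofFinite ι
  choose N hN using hf
  let N0 := Finset.univ.sup N
  have h2 : ∀ σ, ∃ c : M, j c = PP g σ ^ N0 • f σ := fun σ =>
    (pow_smul_mem_of_le (Finset.le_sup (Finset.mem_univ σ)) (hN σ))
  choose c hc using h2
  refine ⟨∑ σ, eL g hg σ N0 ⊗ₜ c σ, ?_⟩
  ext σ
  rw [theta_sum, hc, Algebra.smul_def, inv_mul_cancel_left₀ (PP_ne g hg σ N0)]

theorem kappa_artinian [IsLocalRing C] (hg : ∀ i, algebraMap C K (g i) ≠ 0)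
    (hm : Ideal.span (Set.range g) = maximalIdeal C) (n : ℕ) :
    IsArtinian C (LL g (1 : Submodule C K) n ⊗[C] (C ⧸ maximalIdeal C)) := by
  classical
  have := Fintype.ofFinite ι
  have hκ : IsArtinian C (C ⧸ maximalIdeal C) := by
    let _ : Field (C ⧸ maximalIdeal C) := Ideal.Quotient.field _
    exact isArtinian_of_surjective_algebraMap (S := C) (R := C ⧸ maximalIdeal C)
      Ideal.Quotient.mk_surjective
  cases n with
  | zero =>
    refine isArtinian_of_surjective _
      (TensorProduct.mk C (LL g (1 : Submodule C K) 0) (C ⧸ maximalIdeal C)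
        (eL g hg Fin.elim0 0)) ?_
    intro t
    obtain ⟨N, m, rfl⟩ := tensor_normal g hg t
    refine ⟨m Fin.elim0, ?_⟩
    rw [Fintype.sum_unique]
    have : (default : Fin 0 → ι) = Fin.elim0 := Subsingleton.elim _ _
    rw [this, TensorProduct.mk_apply, eL_smul g hg _ 0 N, zero_add]
    simp [PP]
  | succ n =>
    have : Subsingleton (LL g (1 : Submodule C K) (n + 1) ⊗[C] (C ⧸ maximalIdeal C)) := by
      refine subsingleton_of_forall_eq 0 fun t => ?_
      obtain ⟨N, m, rfl⟩ := tensor_normal g hg t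
      refine Finset.sum_eq_zero fun σ _ => ?_
      rw [eL_smul g hg σ N 1, TensorProduct.smul_tmul]
      obtain ⟨b, hb⟩ := Ideal.Quotient.mk_surjective (m σ)
      have : PP g σ ^ 1 • m σ = 0 := by
        rw [← hb]
        refine Ideal.Quotient.eq_zero_iff_mem.2 (Ideal.mul_mem_right _ _ ?_)
        rw [pow_one, PP, Fin.prod_univ_succ, ← hm]
        exact Ideal.mul_mem_right _ _ (Ideal.subset_span ⟨_, rfl⟩)
      rw [this, tmul_zero]
    infer_instance

end Theta

end Cech

open IsLocalRing TensorProduct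
set_option synthInstance.maxHeartbeats 1000000
set_option maxHeartbeats 1000000

set_option linter.unusedSectionVars false
section ThmL
open Function

variable {C K : Type} [CommRing C] [Field K] [Algebra C K]

theorem integral_of_additive (p : ℕ) (hp : p.Prime) (e : ℕ) (c : Fin e → C) (a : C) (v w : K)
    (h : v ^ p ^ e - ∑ j : Fin e, c j • v ^ p ^ (j : ℕ) = w)
    (hw : a • w ∈ integralClosure C K) : a • v ∈ integralClosure C K := by
  have hpe : 0 < p ^ e := pow_pos hp.pos _
  have hlt : ∀ j : Fin e, p ^ (j : ℕ) < p ^ e := fun j => Nat.pow_lt_pow_right hp.one_lt j.2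
  suffices IsIntegral (integralClosure C K) (a • v) from
    isIntegral_trans (R := C) (A := integralClosure C K) _ this
  have hw' : a ^ p ^ e • w ∈ integralClosure C K := by
    obtain ⟨q, hq⟩ := Nat.exists_eq_succ_of_ne_zero hpe.ne'
    rw [hq, pow_succ, mul_smul]
    exact Subalgebra.smul_mem _ hw _
  let b : integralClosure C K := ⟨_, hw'⟩
  let Q : Polynomial (integralClosure C K) :=
    ∑ j : Fin e, Polynomial.C (algebraMap C _ (c j * a ^ (p ^ e - p ^ (j : ℕ)))) *
      Polynomial.X ^ (p ^ (j : ℕ)) + Polynomial.C b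
  have hQ : Q.degree < (p ^ e : ℕ) := by
    refine (Polynomial.degree_add_le _ _).trans_lt (max_lt ?_ ?_)
    · refine (Polynomial.degree_sum_le _ _).trans_lt ?_
      rw [Finset.sup_lt_iff (WithBot.bot_lt_coe _)]
      intro j _
      refine (Polynomial.degree_C_mul_X_pow_le _ _).trans_lt ?_
      exact_mod_cast hlt j
    · exact Polynomial.degree_C_le.trans_lt (by exact_mod_cast hpe)
  refine ⟨Polynomial.X ^ (p ^ e) - Q, (Polynomial.monic_X_pow _).sub_of_left (by rwa [Polynomial.degree_X_pow]), ?_⟩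
  simp only [Q, Polynomial.eval₂_sub, Polynomial.eval₂_add, Polynomial.eval₂_finsetSum,
    Polynomial.eval₂_mul, Polynomial.eval₂_C, Polynomial.eval₂_pow,
    Polynomial.eval₂_X]
  change _ - (_ + a ^ p ^ e • w) = 0
  rw [← h, smul_sub, Finset.smul_sum]
  have : ∀ j : Fin e, a ^ p ^ e • c j • v ^ p ^ (j : ℕ) =
      (algebraMap (integralClosure C K) K) (algebraMap C _ (c j * a ^ (p ^ e - p ^ (j : ℕ)))) *
      (a • v) ^ p ^ (j : ℕ) := by
    intro j
    rw [← IsScalarTower.algebraMap_apply, smul_pow, ← Algebra.smul_def, smul_smul, smul_smul]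
    congr 1
    rw [mul_assoc, ← pow_add, Nat.sub_add_cancel (hlt j).le, mul_comm]
  simp only [this, smul_pow]
  ring

theorem exists_additive_root [IsAlgClosed K] (p : ℕ) (hp : p.Prime) (e : ℕ) (c : Fin e → C)
    (w : K) : ∃ v : K, v ^ p ^ e - ∑ j : Fin e, c j • v ^ p ^ (j : ℕ) = w := by
  have hpe : 0 < p ^ e := pow_pos hp.pos _
  have hlt : ∀ j : Fin e, p ^ (j : ℕ) < p ^ e := fun j => Nat.pow_lt_pow_right hp.one_lt j.2
  let Q : Polynomial K :=
    ∑ j : Fin e, Polynomial.C (algebraMap C _ (c j)) *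
      Polynomial.X ^ (p ^ (j : ℕ)) + Polynomial.C w
  have hQ : Q.degree < (p ^ e : ℕ) := by
    refine (Polynomial.degree_add_le _ _).trans_lt (max_lt ?_ ?_)
    · refine (Polynomial.degree_sum_le _ _).trans_lt ?_
      rw [Finset.sup_lt_iff (WithBot.bot_lt_coe _)]
      intro j _
      refine (Polynomial.degree_C_mul_X_pow_le _ _).trans_lt ?_
      exact_mod_cast hlt j
    · exact Polynomial.degree_C_le.trans_lt (by exact_mod_cast hpe)
  obtain ⟨v, hv⟩ := IsAlgClosed.exists_root (Polynomial.X ^ (p ^ e) - Q) (by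
    rw [Polynomial.degree_sub_eq_left_of_degree_lt (by rwa [Polynomial.degree_X_pow]),
      Polynomial.degree_X_pow]
    exact_mod_cast hpe.ne')
  refine ⟨v, ?_⟩
  simp only [Q, Polynomial.IsRoot, Polynomial.eval_sub, Polynomial.eval_add,
    Polynomial.eval_finsetSum,
    Polynomial.eval_mul, Polynomial.eval_C, Polynomial.eval_pow, Polynomial.eval_X] at hv
  simp only [Algebra.smul_def]
  linear_combination hv

/-- Artinian and killed by an ideal with Artinian quotient implies Noetherian. -/
theorem noeth_of_art [IsNoetherianRing C] [IsLocalRing C] {N : Type} [AddCommGroup N] [Module C N]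
    (J : Ideal C) (hJ : maximalIdeal C ≤ J.radical) (h : ∀ c ∈ J, ∀ x : N, c • x = 0)
    [IsArtinian C N] : IsNoetherian C N := by
  have hJ' : IsArtinianRing (C ⧸ J) := by
    rw [isArtinianRing_iff_isNoetherianRing_krullDimLE_zero]
    refine ⟨inferInstance, ?_⟩
    rw [Ring.krullDimLE_zero_iff]
    intro P hP
    have h1 : maximalIdeal C ≤ P.comap (Ideal.Quotient.mk J) := by
      refine hJ.trans ?_
      have : (P.comap (Ideal.Quotient.mk J)).IsPrime := inferInstance
      refine (this.radical_le_iff).2 ?_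
      intro x hx
      rw [Ideal.mem_comap, Ideal.Quotient.eq_zero_iff_mem.2 hx]; exact zero_mem _
    have h2 : (P.comap (Ideal.Quotient.mk J)) = maximalIdeal C :=
      ((IsLocalRing.maximalIdeal.isMaximal C).eq_of_le (Ideal.IsPrime.ne_top inferInstance) h1).symm
    have h3 : (P.comap (Ideal.Quotient.mk J)).IsMaximal := h2 ▸ inferInstance
    rw [← Ideal.map_comap_of_surjective _ Ideal.Quotient.mk_surjective P]
    refine (Ideal.map_eq_top_or_isMaximal_of_surjective _ Ideal.Quotient.mk_surjective h3).resolve_left ?_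
    rw [Ideal.map_comap_of_surjective _ Ideal.Quotient.mk_surjective P]
    exact hP.ne_top
  let _ : Module (C ⧸ J) N := Module.IsTorsionBySet.module (I := J) (fun x c => h c c.2 x)
  have : IsScalarTower C (C ⧸ J) N := Module.IsTorsionBySet.isScalarTower _
  have : IsArtinian (C ⧸ J) N := isArtinian_of_tower C inferInstance
  have : IsNoetherian (C ⧸ J) N := IsSemiprimaryRing.isNoetherian_iff_isArtinian.2 this
  have : Module.Finite C N := Module.Finite.trans (C ⧸ J) N
  infer_instance

theorem exists_relation {N : Type} [AddCommGroup N] [Module C N] [IsNoetherian C N] (a : ℕ → N) :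
    ∃ (e : ℕ) (c : Fin e → C), ∑ j : Fin e, c j • a j = a e := by
  let W : ℕ →o Submodule C N := ⟨fun e => Submodule.span C (Set.range fun j : Fin e => a j), by
    intro e e' h
    refine Submodule.span_mono ?_
    rintro _ ⟨j, rfl⟩
    exact ⟨Fin.castLE h j, rfl⟩⟩
  obtain ⟨e, he⟩ := monotone_stabilizes_iff_noetherian.2 ‹_› W
  have : a e ∈ W e := by
    rw [he (e + 1) (Nat.le_succ e)]
    exact Submodule.subset_span ⟨Fin.last e, rfl⟩
  obtain ⟨c, hc⟩ := (Submodule.mem_span_range_iff_exists_fun C).1 this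
  exact ⟨e, c, hc⟩

end ThmL

open IsLocalRing TensorProduct
set_option synthInstance.maxHeartbeats 1000000
set_option maxHeartbeats 1000000

set_option linter.unusedSectionVars false
section ThmL2
open Function

variable {C K ι : Type} [CommRing C] [Field K] [Algebra C K] (g : ι → C) [Finite ι]

variable (C K) in
abbrev IB : Submodule C K := Subalgebra.toSubmodule (integralClosure C K)

/-- a power of `g i` kills the image of cohomology -/
theorem kill_image [IsNoetherianRing C] [IsLocalRing C]
    [∀ n, Module.Flat C (LL g (1 : Submodule C K) n)] (R : Submodule C K) (hR : R ≤ IB C K)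
    (hfg : Module.Finite C R) (n : ℕ)
    (hv : ZZ (fun n => LL g (1 : Submodule C K) n) (dL g 1) C (n + 1) ≤
      BB (fun n => LL g (1 : Submodule C K) n) (dL g 1) C (n + 1)) (i : ι)
    (hfl : Module.Flat C (locV (g i) (IB C K))) :
    ∃ s : ℕ, ∀ t ∈ ZZ (fun n => LL g (1 : Submodule C K) n) (dL g 1) R (n + 1),
      g i ^ s • theta g R.subtype (n + 1) t ∈ (LL g (IB C K) n).map (dK C K ι n) := by
  have : Module.FinitePresentation C R := Module.finitePresentation_of_finite C R
  obtain ⟨r, φ, ψ, h⟩ := Module.Flat.exists_factorization_of_finitePresentation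
    (Submodule.inclusion (hR.trans (le_locV (g i) (IB C K))))
  let φ' : R →ₗ[C] (Fin r → C) := (Finsupp.linearEquivFunOnFinite C C (Fin r)).toLinearMap ∘ₗ φ
  let ψ' : (Fin r → C) →ₗ[C] K := (locV (g i) (IB C K)).subtype ∘ₗ ψ ∘ₗ
    (Finsupp.linearEquivFunOnFinite C C (Fin r)).symm.toLinearMap
  have h' : ∀ x : R, (x : K) = ψ' (φ' x) := by
    intro x
    have := congrArg Subtype.val (LinearMap.congr_fun h x)
    simpa [ψ', φ'] using this
  have h1 : ∀ k : Fin r, ∃ N : ℕ, g i ^ N • ψ' (Pi.single k 1) ∈ IB C K := fun k =>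
    (ψ ((Finsupp.linearEquivFunOnFinite C C (Fin r)).symm (Pi.single k 1))).2
  choose N hN using h1
  let s := Finset.univ.sup N
  let χ : (Fin r → C) →ₗ[C] K := g i ^ s • ψ'
  have hχ : LinearMap.range χ ≤ IB C K := by
    rintro _ ⟨x, rfl⟩
    rw [LinearMap.pi_apply_eq_sum_univ χ x]
    refine sum_mem fun k _ => Submodule.smul_mem _ _ ?_
    have h3 := pow_smul_mem_of_le (Finset.le_sup (Finset.mem_univ k)) (hN k)
    have e : (fun j => if k = j then (1 : C) else 0) = Pi.single k 1 := by
      ext j; rw [Pi.single_apply]; simp only [eq_comm]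
    rw [e]
    exact h3
  refine ⟨s, fun t ht => ?_⟩
  have h4 := ZZ_map φ' ht
  obtain ⟨u, hu⟩ := HH_vanish_pi (dL_dL g 1) r (n + 1) hv h4
  refine ⟨theta g χ n u, theta_mem g χ n _ hχ u, ?_⟩
  rw [← theta_d, hu, theta_comp]
  have : χ ∘ₗ φ' = g i ^ s • R.subtype := by
    ext x
    change g i ^ s • ψ' (φ' x) = _
    rw [← h']; rfl
  rw [this]
  ext σ
  change theta g (g i ^ s • R.subtype) (n + 1) t σ = g i ^ s • theta g R.subtype (n + 1) t σ
  clear hu u h4 ht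
  induction t using TensorProduct.induction_on with
  | zero => simp
  | add a b ha hb => simp only [map_add, Pi.add_apply, smul_add, ha, hb]
  | tmul l m =>
    rw [theta_tmul, theta_tmul, LinearMap.smul_apply, mul_smul_comm]

theorem image_artinian {X Y : Type} [AddCommGroup X] [Module C X] [AddCommGroup Y] [Module C Y]
    (P Q : Submodule C X) (h : IsArtinian C (P ⧸ Q.submoduleOf P)) (θ : X →ₗ[C] Y)
    (W : Submodule C Y) (hB : ∀ z ∈ Q, θ z ∈ W) : IsArtinian C ((P.map θ).map W.mkQ) := by
  have e : (P.map θ).map W.mkQ = LinearMap.range (W.mkQ ∘ₗ θ ∘ₗ P.subtype) := by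
    rw [LinearMap.range_comp, LinearMap.range_comp, Submodule.range_subtype]
  have hker : Q.submoduleOf P ≤ LinearMap.ker (W.mkQ ∘ₗ θ ∘ₗ P.subtype) := by
    intro z hz
    rw [LinearMap.mem_ker, LinearMap.comp_apply, LinearMap.comp_apply, Submodule.mkQ_apply,
      Submodule.Quotient.mk_eq_zero]
    exact hB _ hz
  have h3 := isArtinian_of_surjective _ (Submodule.factor hker)
      (Submodule.factor_surjective hker)
  rw [e]
  exact isArtinian_of_linearEquiv (W.mkQ ∘ₗ θ ∘ₗ P.subtype).quotKerEquivRange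

theorem image_noeth' [IsNoetherianRing C] [IsLocalRing C] {X Y : Type} [AddCommGroup X]
    [Module C X] [AddCommGroup Y] [Module C Y] (P Q : Submodule C X)
    (h : IsArtinian C (P ⧸ Q.submoduleOf P)) (θ : X →ₗ[C] Y)
    (W : Submodule C Y) (hB : ∀ z ∈ Q, θ z ∈ W)
    (hm : Ideal.span (Set.range g) = maximalIdeal C)
    (s : ι → ℕ) (hs : ∀ i, ∀ t ∈ P, g i ^ s i • θ t ∈ W) :
    IsNoetherian C ((P.map θ).map W.mkQ) := by
  have h2 := image_artinian P Q h θ W hB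
  refine noeth_of_art (Ideal.span (Set.range fun i => g i ^ s i)) ?_ ?_
  · rw [← hm, Ideal.span_le]
    rintro _ ⟨i, rfl⟩
    exact ⟨s i, Ideal.subset_span ⟨i, rfl⟩⟩
  · rintro c hc ⟨_, ⟨_, ⟨z, hz, rfl⟩, rfl⟩⟩
    apply Subtype.ext
    change c • W.mkQ (θ z) = 0
    have : Ideal.span (Set.range fun i => g i ^ s i) ≤
        LinearMap.ker (LinearMap.toSpanSingleton C _ (W.mkQ (θ z))) := by
      rw [Ideal.span_le]
      rintro _ ⟨i, rfl⟩
      change g i ^ s i • W.mkQ (θ z) = 0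
      rw [← map_smul, Submodule.mkQ_apply, Submodule.Quotient.mk_eq_zero]
      exact hs i z hz
    exact this hc

theorem HH_rel [IsNoetherianRing C] [IsLocalRing C] {L : ℕ → Type} [∀ n, AddCommGroup (L n)]
    [∀ n, Module C (L n)] {d : ∀ n, L n →ₗ[C] L (n + 1)} {M : Type} [AddCommGroup M] [Module C M]
    {n : ℕ} (h : IsArtinian C (HH L d M n)) {Y : Type} [AddCommGroup Y] [Module C Y]
    (θ : L n ⊗[C] M →ₗ[C] Y)
    (W : Submodule C Y) (hB : ∀ z ∈ BB L d M n, θ z ∈ W)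
    (hm : Ideal.span (Set.range g) = maximalIdeal C)
    (s : ι → ℕ) (hs : ∀ i, ∀ t ∈ ZZ L d M n, g i ^ s i • θ t ∈ W)
    (t : ℕ → L n ⊗[C] M) (ht : ∀ k, t k ∈ ZZ L d M n) :
    ∃ (e : ℕ) (c : Fin e → C), θ (t e) - ∑ j : Fin e, c j • θ (t j) ∈ W := by
  have hN := image_noeth' g _ _ h θ W hB hm s hs
  let A : ℕ → (((ZZ L d M n).map θ).map W.mkQ) := fun k =>
    Subtype.mk (W.mkQ (θ (t k))) ⟨θ (t k), ⟨t k, ht k, rfl⟩, rfl⟩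
  obtain ⟨e, c, hc⟩ := exists_relation (C := C) A
  refine ⟨e, c, ?_⟩
  have hc' : ∑ j : Fin e, c j • W.mkQ (θ (t j)) = W.mkQ (θ (t e)) := by
    have := congrArg Subtype.val hc
    rw [AddSubmonoidClass.coe_finsetSum] at this
    exact this
  rw [← Submodule.Quotient.mk_eq_zero, ← Submodule.mkQ_apply, map_sub, map_sum, ← hc']
  simp

theorem image_rel [IsNoetherianRing C] [IsLocalRing C] (hg : ∀ i, algebraMap C K (g i) ≠ 0)
    (hm : Ideal.span (Set.range g) = maximalIdeal C)
    [∀ n, Module.Flat C (LL g (1 : Submodule C K) n)]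
    (R : Submodule C K) (hR : R ≤ IB C K)
    (hfg : Module.Finite C R) (n : ℕ)
    (hv : ZZ (fun n => LL g (1 : Submodule C K) n) (dL g 1) C (n + 1) ≤
      BB (fun n => LL g (1 : Submodule C K) n) (dL g 1) C (n + 1))
    (hfl : ∀ i, Module.Flat C (locV (g i) (IB C K)))
    (t : ℕ → LL g (1 : Submodule C K) (n + 1) ⊗[C] R)
    (ht : ∀ k, t k ∈ ZZ (fun n => LL g (1 : Submodule C K) n) (dL g 1) R (n + 1)) :
    ∃ (e : ℕ) (c : Fin e → C), theta g R.subtype (n + 1) (t e) -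
      ∑ j : Fin e, c j • theta g R.subtype (n + 1) (t j) ∈ (LL g (IB C K) n).map (dK C K ι n) := by
  have hart : IsArtinian C (HH (fun n => LL g (1 : Submodule C K) n) (dL g 1) R (n + 1)) :=
    HH_artinian (L := fun n => LL g (1 : Submodule C K) n) (d := dL g 1) (dL_dL g 1)
      (fun M _ _ n z hz x hx => tors_all g 1 hg hm M n z hz x hx)
      (kappa_artinian g hg hm) (n + 1) R hfg
  have hB : ∀ z ∈ BB (fun n => LL g (1 : Submodule C K) n) (dL g 1) R (n + 1),
      theta g R.subtype (n + 1) z ∈ ((LL g (IB C K) n).map (dK C K ι n)) := by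
    rintro z ⟨u, hu⟩
    have hu' : (dL g 1 n).rTensor R u = z := hu
    rw [← hu', theta_d]
    exact ⟨_, theta_mem g R.subtype n _ (by rw [Submodule.range_subtype]; exact hR) u, rfl⟩
  choose s hs using fun i => kill_image g R hR hfg n hv i (hfl i)
  exact HH_rel g hart (theta g R.subtype (n + 1)) _ hB hm s hs t ht

theorem dK_frob (p : ℕ) [Fact p.Prime] [CharP K p] (n k : ℕ) (f : (Fin n → ι) → K) :
    dK C K ι n (fun σ => f σ ^ p ^ k) = fun σ => dK C K ι n f σ ^ p ^ k := by
  ext σ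
  rw [dK_apply, dK_apply, ← iterateFrobenius_def p k, map_sum]
  refine Finset.sum_congr rfl fun i _ => ?_
  rw [map_mul, iterateFrobenius_def p k, iterateFrobenius_def p k]
  congr 1
  have : iterateFrobenius K p k ((-1) ^ (i : ℕ)) = (-1) ^ (i : ℕ) := by simp
  rw [← iterateFrobenius_def p k, this]

theorem exact_IB (p : ℕ) [hp : Fact p.Prime] [CharP K p] [IsAlgClosed K] [Nonempty ι]
    [IsNoetherianRing C] [IsLocalRing C] (hg : ∀ i, algebraMap C K (g i) ≠ 0)
    (hm : Ideal.span (Set.range g) = maximalIdeal C)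
    [∀ n, Module.Flat C (LL g (1 : Submodule C K) n)] (n : ℕ)
    (hv : ZZ (fun n => LL g (1 : Submodule C K) n) (dL g 1) C (n + 1) ≤
      BB (fun n => LL g (1 : Submodule C K) n) (dL g 1) C (n + 1))
    (hfl : ∀ i, Module.Flat C (locV (g i) (IB C K))) (f : (Fin (n + 1) → ι) → K)
    (hf : f ∈ LL g (IB C K) (n + 1)) (hd : dK C K ι (n + 1) f = 0) :
    ∃ v ∈ LL g (IB C K) n, dK C K ι n v = f := by
  obtain ⟨a⟩ := ‹Nonempty ι›
  choose N hN using hf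
  let num : (Fin (n + 1) → ι) → K := fun σ => PP g σ ^ N σ • f σ
  have hfin : (Set.range num).Finite := Set.finite_range _
  let R' : Subalgebra C K := Algebra.adjoin C (Set.range num)
  let R : Submodule C K := Subalgebra.toSubmodule R'
  have hR' : R' ≤ integralClosure C K := Algebra.adjoin_le (by
    rintro _ ⟨σ, rfl⟩; exact hN σ)
  have hR : R ≤ IB C K := hR'
  have hRfg : Module.Finite C R := by
    refine Module.Finite.of_fg (fg_adjoin_of_finite hfin ?_)
    rintro _ ⟨σ, rfl⟩; exact hN σ
  let F : ℕ → (Fin (n + 1) → ι) → K := fun k σ => f σ ^ p ^ k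
  have hF : ∀ k, ∃ t ∈ ZZ (fun n => LL g (1 : Submodule C K) n) (dL g 1) R (n + 1),
      theta g R.subtype (n + 1) t = F k := by
    intro k
    obtain ⟨t, ht⟩ := theta_surj g hg R.subtype (n + 1) (F k) (by
      rw [Submodule.range_subtype]
      intro σ
      refine ⟨N σ * p ^ k, ?_⟩
      change _ • (f σ ^ p ^ k) ∈ R'
      rw [pow_mul, ← smul_pow]
      exact Subalgebra.pow_mem R' (Algebra.subset_adjoin (Set.mem_range_self σ)) _)
    refine ⟨t, ?_, ht⟩
    rw [ZZ, LinearMap.mem_ker]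
    apply theta_injective g hg R.subtype Subtype.val_injective (n + 2)
    rw [theta_d, ht, dK_frob, hd, map_zero]
    ext σ
    simp [hp.out.ne_zero]
  choose t ht hθ using hF
  obtain ⟨e, c, hW⟩ := image_rel g hg hm R hR hRfg n hv hfl t ht
  simp only [hθ] at hW
  obtain ⟨w, hw, hdw⟩ := hW
  choose v hv using fun σ => exists_additive_root p hp.out e c (w σ)
  have hvL : v ∈ LL g (IB C K) n := by
    intro σ
    obtain ⟨N, hN⟩ := hw σ
    exact ⟨N, integral_of_additive p hp.out e c _ _ _ (hv σ) hN⟩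
  let b := f - dK C K ι n v
  have hb : ∀ σ, b σ ∈ integralClosure C K := by
    intro σ
    have := integral_of_additive (C := C) p hp.out e c 1 (b σ) 0 ?_ (by simp)
    · simpa using this
    have e1 : ∀ k, b σ ^ p ^ k = F k σ - dK C K ι n (fun τ => v τ ^ p ^ k) σ := by
      intro k
      rw [dK_frob]
      exact sub_pow_char_pow _ _ k
    simp only [e1]
    have e2 : (fun τ => v τ ^ p ^ e) - ∑ j : Fin e, c j • (fun τ => v τ ^ p ^ (j : ℕ)) = w := by
      ext τ
      simpa using hv τ
    have e3 := congrFun hdw σ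
    rw [← e2, map_sub, map_sum] at e3
    simp only [map_smul, Pi.sub_apply, Finset.sum_apply, Pi.smul_apply] at e3
    simp only [smul_sub, Finset.sum_sub_distrib]
    linear_combination -e3
  have hdb : dK C K ι (n + 1) b = 0 := by
    rw [map_sub, hd, dd_K, sub_zero]
  have hsb := s_d (C := C) a n b
  rw [hdb, map_zero] at hsb
  refine ⟨v + sK C K a n b, add_mem hvL fun τ => le_locV _ _ (hb _), ?_⟩
  rw [map_add, ← sub_eq_zero.1 hsb.symm]
  simp [b]

theorem flat_one [FaithfulSMul C K] : Module.Flat C (1 : Submodule C K) := by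
  have : Function.Injective (Algebra.linearMap C K) := FaithfulSMul.algebraMap_injective C K
  rw [Submodule.one_eq_range]
  exact Module.Flat.of_linearEquiv (LinearEquiv.ofInjective _ this).symm

noncomputable def Bd (M : Submodule C K) : ∀ n : ℕ, Submodule C (LL g M n)
  | 0 => ⊥
  | n + 1 => LinearMap.range (dL g M n)

theorem syz_of_exact (M : Submodule C K) (δ : ℕ)
    (hfl : ∀ n, Module.Flat C (LL g M (n + 1)))
    (hex : ∀ n < δ, LinearMap.ker (dL g M n) ≤ Bd g M n) (k : ℕ) :
    ∀ n, n + k ≤ δ → Syz C k (LL g M n ⧸ Bd g M n) := by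
  induction k with
  | zero => intros; trivial
  | succ k ih =>
    intro n hn
    have hle : Bd g M n ≤ LinearMap.ker (dL g M n) := by
      cases n with
      | zero => exact bot_le
      | succ n =>
        rintro _ ⟨u, rfl⟩
        exact LinearMap.congr_fun (dL_dL g M n) u
    refine ⟨LL g M (n + 1), inferInstance, inferInstance, LL g M (n + 1) ⧸ Bd g M (n + 1),
      inferInstance, inferInstance, (Bd g M n).liftQ (dL g M n) hle, Submodule.mkQ _, hfl n,
      ?_, ?_, Submodule.mkQ_surjective _, ih (n + 1) (by omega)⟩
    · rw [← LinearMap.ker_eq_bot, Submodule.ker_liftQ_eq_bot]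
      exact hex n (by omega)
    · rw [LinearMap.exact_iff, Submodule.ker_mkQ, Submodule.range_liftQ]
      rfl

def LL0 (M : Submodule C K) : LL g M 0 ≃ₗ[C] M where
  toFun f := ⟨f.1 Fin.elim0, by
    obtain ⟨N, hN⟩ := f.2 Fin.elim0
    simpa [PP] using hN⟩
  invFun m := ⟨fun _ => m.1, fun _ => le_locV _ _ m.2⟩
  left_inv f := by
    apply Subtype.ext
    ext σ
    exact congrArg f.1 (Subsingleton.elim _ _)
  right_inv _ := rfl
  map_add' _ _ := rfl
  map_smul' _ _ := rfl

theorem theoremL [IsDomain C] [FaithfulSMul C K] (p : ℕ) [hp : Fact p.Prime] [CharP K p]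
    [IsAlgClosed K] [IsNoetherianRing C] [IsLocalRing C] {D : ℕ} (hD : WG C D)
    (hfl : ∀ c ∈ maximalIdeal C, c ≠ 0 → Module.Flat C (locV c (IB C K))) :
    Module.Flat C (IB C K) := by
  classical
  have hinj := FaithfulSMul.algebraMap_injective C K
  obtain ⟨S, hS⟩ := (isNoetherianRing_iff_ideal_fg C).1 inferInstance (maximalIdeal C)
  let ι := {s : S // s.1 ≠ 0}
  let g : ι → C := fun i => i.1.1
  have hg0 : ∀ i, g i ≠ 0 := fun i => i.2
  have hg : ∀ i, algebraMap C K (g i) ≠ 0 := fun i h => hg0 i (hinj (h.trans (map_zero _).symm))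
  have hm : Ideal.span (Set.range g) = maximalIdeal C := by
    rw [← hS]
    refine le_antisymm (Ideal.span_mono ?_) (Submodule.span_le.2 ?_)
    · rintro _ ⟨i, rfl⟩; exact i.1.2
    · intro s hs
      by_cases h : s = 0
      · rw [h]; exact zero_mem _
      · exact Ideal.subset_span ⟨⟨⟨s, hs⟩, h⟩, rfl⟩
  have hgm : ∀ i, g i ∈ maximalIdeal C := fun i => hm ▸ Ideal.subset_span ⟨i, rfl⟩
  rcases isEmpty_or_nonempty ι with hι | hι
  · have : maximalIdeal C = ⊥ := by rw [← hm, Set.range_eq_empty, Ideal.span_empty]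
    have hF : IsField C := IsLocalRing.isField_iff_maximalIdeal_eq.2 this
    let _ := hF.toField
    infer_instance
  obtain ⟨δ, I, hIm, hI, hδ⟩ := Reg.exists_maximal hD
  have hPPm : ∀ n (σ : Fin (n + 1) → ι), PP g σ ∈ maximalIdeal C := by
    intro n σ
    rw [PP, Fin.prod_univ_succ]
    exact Ideal.mul_mem_right _ _ (hgm _)
  have hPP0 : ∀ n (σ : Fin n → ι), PP g σ ≠ 0 := fun n σ =>
    Finset.prod_ne_zero_iff.2 fun j _ => hg0 _
  have hF1 : ∀ n, Module.Flat C (LL g (1 : Submodule C K) n) := by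
    intro n
    apply flat_LL
    intro σ
    have := flat_one (C := C) (K := K)
    exact flat_locV (K := K) _ (fun h => hPP0 n σ (hinj (h.trans (map_zero _).symm))) _
  have hvan := HH_vanish_reg (L := fun n => LL g (1 : Submodule C K) n) (d := dL g 1)
    (dL_dL g 1) (fun M _ _ n z hz x hx => tors_all g 1 hg hm M n z hz x hx) hI hIm 0
    (by intro n hn; omega)
  have hs := syz_of_exact g (IB C K) δ
    (fun n => flat_LL g _ _ fun σ => hfl _ (hPPm n σ) (hPP0 _ σ)) (by
      intro n hn f hf
      have hf' : dK C K ι n f.1 = 0 := congrArg Subtype.val hf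
      cases n with
      | zero =>
        obtain ⟨a⟩ := hι
        have := s_d0 (C := C) a f.1
        rw [hf', map_zero] at this
        exact (Submodule.mem_bot C).2 (Subtype.ext this.symm)
      | succ n =>
        obtain ⟨v, hv, hdv⟩ := exact_IB g p hg hm n (hvan (n + 1) (by omega))
          (fun i => hfl _ (hgm i) (hg0 i)) f.1 f.2 hf'
        exact ⟨⟨v, hv⟩, Subtype.ext hdv⟩) δ 0 (by omega)
  have h0 := hδ _ hs
  have e : (LL g (IB C K) 0 ⧸ Bd g (IB C K) 0) ≃ₗ[C] IB C K :=
    (Submodule.quotEquivOfEqBot _ rfl).trans (LL0 g _)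
  exact Module.Flat.of_linearEquiv e.symm

end ThmL2

open IsLocalRing TensorProduct
set_option synthInstance.maxHeartbeats 1000000
set_option maxHeartbeats 1000000

set_option linter.unusedSectionVars false
section Loc
open Function

theorem Syz.restrict {C C' : Type} [CommRing C] [CommRing C'] [Algebra C C'] [Module.Flat C C']
    (k : ℕ) : ∀ (X : Type) [AddCommGroup X] [Module C' X] [Module C X] [IsScalarTower C C' X],
    Syz C' k X → Syz C k X := by
  induction k with
  | zero => intros; trivial
  | succ k ih =>
    rintro X _ _ _ _ ⟨L, _, _, Y, _, _, f, g, hL, hf, he, hg, hY⟩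
    let _ : Module C L := Module.compHom L (algebraMap C C')
    let _ : Module C Y := Module.compHom Y (algebraMap C C')
    have : IsScalarTower C C' L := IsScalarTower.of_algebraMap_smul fun _ _ => rfl
    have : IsScalarTower C C' Y := IsScalarTower.of_algebraMap_smul fun _ _ => rfl
    exact ⟨L, inferInstance, inferInstance, Y, inferInstance, inferInstance,
      f.restrictScalars C, g.restrictScalars C, Module.Flat.trans C C' L, hf, he, hg, ih Y hY⟩

theorem WG.localize {C C' : Type} [CommRing C] [CommRing C'] [Algebra C C'] (S : Submonoid C)
    [IsLocalization S C'] {D : ℕ} (h : WG C D) : WG C' D := by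
  intro X _ _ hX
  have : Module.Flat C C' := IsLocalization.flat C' S
  let _ : Module C X := Module.compHom X (algebraMap C C')
  have : IsScalarTower C C' X := IsScalarTower.of_algebraMap_smul fun _ _ => rfl
  rw [Module.flat_iff_of_isLocalization C' S]
  exact h X (hX.restrict)

variable {C K : Type} [CommRing C] [Field K] [Algebra C K]

theorem IB_le {C' : Type} [CommRing C'] [Algebra C C'] [Algebra C' K] [IsScalarTower C C' K] :
    IB C K ≤ (IB C' K).restrictScalars C := fun x hx =>
  IsIntegral.tower_top (R := C) (A := C') (x := x) hx

theorem IB_loc [FaithfulSMul C K] (S : Submonoid C) (hS : ∀ s ∈ S, s ≠ 0)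
    (C' : Type) [CommRing C'] [Algebra C C'] [IsLocalization S C']
    [Algebra C' K] [IsScalarTower C C' K] :
    IsLocalizedModule S (Submodule.inclusion (IB_le (C := C) (K := K) (C' := C'))) where
  map_units := by
    rintro ⟨s, hs⟩
    have hu : IsUnit (algebraMap C C' s) := IsLocalization.map_units C' ⟨s, hs⟩
    obtain ⟨u, hu⟩ := hu
    have h1 : ∀ x : K, s • x = u.1 • x := fun x => by rw [hu, algebraMap_smul]
    rw [Module.End.isUnit_iff]
    constructor
    · intro a b hab
      have : s • a.1 = s • b.1 := congrArg Subtype.val hab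
      rw [h1, h1] at this
      apply Subtype.ext
      have h2 := congrArg (fun x => u⁻¹.1 • x) this
      simpa [smul_smul] using h2
    · rintro ⟨b, hb⟩
      refine ⟨⟨u⁻¹.1 • b, Submodule.smul_mem (IB C' K) _ hb⟩, Subtype.ext ?_⟩
      change s • (u⁻¹.1 • b) = b
      rw [h1]; simp [smul_smul]
  surj := by
    rintro ⟨b, hb⟩
    obtain ⟨m, hm⟩ := IsIntegral.exists_multiple_integral_of_isLocalization S b hb
    exact ⟨(⟨_, hm⟩, m), rfl⟩
  exists_of_eq := by
    intro a b hab
    exact ⟨1, by rw [Submodule.inclusion_injective _ hab]⟩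

/-- the algebra structure on `K` over a localization -/
theorem exists_alg [FaithfulSMul C K] (S : Submonoid C) (hS : ∀ s ∈ S, s ≠ 0)
    (C' : Type) [CommRing C'] [Algebra C C'] [IsLocalization S C'] :
    ∃ (_ : Algebra C' K), IsScalarTower C C' K ∧ FaithfulSMul C' K := by
  have hinj := FaithfulSMul.algebraMap_injective C K
  have hu : ∀ s : S, IsUnit (algebraMap C K s) := fun s =>
    (Ne.isUnit fun h => hS s s.2 (hinj (h.trans (map_zero _).symm)))
  let A : Algebra C' K := (IsLocalization.lift (M := S) (g := algebraMap C K) hu).toAlgebra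
  refine ⟨A, IsScalarTower.of_algebraMap_eq fun x => ?_, ?_⟩
  · exact (IsLocalization.lift_eq hu x).symm
  · rw [faithfulSMul_iff_algebraMap_injective]
    change Injective (IsLocalization.lift (M := S) (g := algebraMap C K) hu)
    rw [IsLocalization.lift_injective_iff]
    intro x y
    constructor
    · intro h
      have := congrArg (IsLocalization.lift (M := S) (g := algebraMap C K) hu) h
      simpa using this
    · intro h
      rw [hinj h]

theorem flat_of_loc [FaithfulSMul C K] (S : Submonoid C) (hS : ∀ s ∈ S, s ≠ 0)
    (C' : Type) [CommRing C'] [Algebra C C'] [IsLocalization S C']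
    [Algebra C' K] [IsScalarTower C C' K] (h : Module.Flat C' (IB C' K)) {M' : Type}
    [AddCommMonoid M'] [Module C M'] (f : IB C K →ₗ[C] M') [IsLocalizedModule S f] :
    Module.Flat C M' := by
  have := IB_loc (K := K) S hS C'
  have : Module.Flat C C' := IsLocalization.flat C' S
  have h1 : Module.Flat C ((IB C' K).restrictScalars C) := Module.Flat.trans C C' (IB C' K)
  exact Module.Flat.of_linearEquiv (IsLocalizedModule.linearEquiv S f
    (Submodule.inclusion (IB_le (C := C) (K := K) (C' := C'))))

theorem flat_main (K : Type) [Field K] [IsAlgClosed K] (p : ℕ) [hp : Fact p.Prime] [CharP K p]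
    {D : ℕ} (n : ℕ) : ∀ (C : Type) [CommRing C] [IsDomain C] [IsNoetherianRing C] [IsLocalRing C]
    [Algebra C K] [FaithfulSMul C K], WG C D → (maximalIdeal C).height < n →
    Module.Flat C (IB C K) := by
  induction n with
  | zero => intro C _ _ _ _ _ _ _ h; simp at h
  | succ n ih =>
    intro C _ _ _ _ _ _ hD hn
    refine theoremL p hD fun c hc hc0 => ?_
    have hc0' : ∀ s ∈ Submonoid.powers c, s ≠ 0 := by
      rintro _ ⟨k, rfl⟩; exact pow_ne_zero _ hc0
    let C1 := Localization.Away c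
    obtain ⟨_, _, _⟩ := exists_alg (K := K) (Submonoid.powers c) hc0' C1
    have hD1 : WG C1 D := hD.localize (Submonoid.powers c)
    have : IsDomain C1 := IsLocalization.isDomain_localization
      (le_nonZeroDivisors_of_noZeroDivisors fun h => hc0' 0 h rfl)
    have : IsNoetherianRing C1 := IsLocalization.isNoetherianRing (Submonoid.powers c) C1 inferInstance
    have := locV_isLocalized (K := K) c (fun h => hc0
      (FaithfulSMul.algebraMap_injective C K (h.trans (map_zero _).symm))) (IB C K)
    refine flat_of_loc (K := K) (Submonoid.powers c) hc0' C1 ?_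
      (Submodule.inclusion (le_locV c (IB C K)))
    refine Module.flat_of_localized_maximal _ fun P _ => ?_
    have hP0 : ∀ s ∈ P.primeCompl, s ≠ 0 := by
      rintro s hs rfl; exact hs (zero_mem _)
    let C2 := Localization.AtPrime P
    obtain ⟨_, _, _⟩ := exists_alg (K := K) P.primeCompl hP0 C2
    have : IsDomain C2 := IsLocalization.isDomain_localization
      (le_nonZeroDivisors_of_noZeroDivisors fun h => hP0 0 h rfl)
    have : IsNoetherianRing C2 := IsLocalization.isNoetherianRing P.primeCompl C2 inferInstance
    refine flat_of_loc (K := K) P.primeCompl hP0 C2 ?_ (LocalizedModule.mkLinearMap P.primeCompl (IB C1 K))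
    refine ih C2 (hD1.localize P.primeCompl) ?_
    have h1 : (maximalIdeal C2).height = P.height := by
      have e1 := IsLocalRing.maximalIdeal_height_eq_ringKrullDim (R := C2)
      rw [IsLocalization.AtPrime.ringKrullDim_eq_height P C2] at e1
      exact_mod_cast e1
    have h2 : (P.under C).height = P.height := IsLocalization.height_under (Submonoid.powers c) P
    have h3 : P.under C < maximalIdeal C := by
      refine lt_of_le_of_ne (IsLocalRing.le_maximalIdeal (Ideal.IsPrime.ne_top inferInstance)) ?_
      intro h
      have h4 : c ∈ P.under C := h ▸ hc
      exact (Ideal.IsPrime.ne_top (I := P) inferInstance) (Ideal.eq_top_of_isUnit_mem _ h4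
        (IsLocalization.Away.algebraMap_isUnit c))
    have h5 := Ideal.height_strict_mono_of_isPrime h3
    rw [h1, ← h2]
    have : (maximalIdeal C).height ≤ n := Order.le_of_lt_add_one (by exact_mod_cast hn)
    exact h5.trans_le this

end Loc

open IsLocalRing TensorProduct
set_option synthInstance.maxHeartbeats 1000000
set_option maxHeartbeats 1000000
set_option linter.unusedSectionVars false

section CoeffField
open Polynomial

theorem section_step {k Q : Type} [Field k] [CommRing Q] (p : ℕ) [hp : Fact p.Prime] [CharP k p]
    (π : Q →+* k) (G : Subring Q) (hG : ∀ q, q ^ p ∈ G)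
    (hsurj : Function.Surjective π)
    (hinj : ∀ g ∈ G, π g = 0 → g = 0) (q : Q) (hq : ∀ g ∈ G, π g ≠ π q) :
    ∀ g ∈ (Algebra.adjoin G {q}).toSubring, π g = 0 → g = 0 := by
  let L : Subfield k :=
    { G.map π with
      inv_mem' := by
        rintro _ ⟨g, hg, rfl⟩
        by_cases h0 : π g = 0
        · rw [h0, inv_zero]; exact (G.map π).zero_mem
        · obtain ⟨t, ht⟩ := hsurj (π g)⁻¹
          refine ⟨g ^ (p - 1) * t ^ p, G.mul_mem (G.pow_mem hg _) (hG t), ?_⟩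
          have h1 : p = (p - 1) + 1 := by have := hp.out.one_lt; omega
          rw [map_mul, map_pow, map_pow, ht]
          nth_rw 2 [h1]
          rw [pow_succ, inv_pow, ← mul_assoc, mul_inv_cancel₀ (pow_ne_zero _ h0), one_mul] }
  let ρ : G →+* L := (π.comp G.subtype).codRestrict L (fun g => ⟨g, g.2, rfl⟩)
  have hρ : Function.Injective ρ := by
    rw [injective_iff_map_eq_zero]
    intro g hg
    exact Subtype.ext (hinj g g.2 (congrArg Subtype.val hg))
  have hnt : Nontrivial G := ρ.domain_nontrivial
  let c : G := ⟨q ^ p, hG q⟩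
  have hirr : Irreducible (X ^ p - C (ρ c) : L[X]) := by
    refine X_pow_sub_C_irreducible_of_prime hp.out fun b hb => ?_
    obtain ⟨_, g, hg, rfl⟩ := b
    have h2 : (π g) ^ p = (π q) ^ p := by
      have := congrArg Subtype.val hb
      exact this.trans (map_pow π q p)
    exact hq g hg (frobenius_inj k p h2)
  have hroot : aeval (π q) (X ^ p - C (ρ c) : L[X]) = 0 := by
    have : algebraMap L k (ρ c) = π q ^ p := by
      change π (q ^ p) = _
      rw [map_pow]
    simp [this]
  have hmin := minpoly.eq_of_irreducible_of_monic hirr hroot (monic_X_pow_sub_C _ hp.out.ne_zero)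
  intro g hg hg0
  have hg' : g ∈ Algebra.adjoin G {q} := hg
  rw [Algebra.adjoin_singleton_eq_range_aeval] at hg'
  obtain ⟨f, rfl⟩ := hg'
  change π (aeval q f) = 0 at hg0
  change aeval q f = 0
  have hm : (X ^ p - C c : G[X]).Monic := monic_X_pow_sub_C _ hp.out.ne_zero
  have hr0 : aeval q (X ^ p - C c : G[X]) = 0 := by
    have : algebraMap G Q c = q ^ p := rfl
    simp [this]
  have e1 := aeval_modByMonic_eq_self_of_root (p := f) hr0
  set r := f %ₘ (X ^ p - C c) with hr
  rw [← e1] at hg0 ⊢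
  have hdeg : r.degree < p := by
    have := degree_modByMonic_lt f hm
    rwa [degree_X_pow_sub_C hp.out.pos] at this
  have e2 : aeval (π q) (r.map ρ) = 0 := by
    rw [← hg0]
    rw [aeval_def, eval₂_map, aeval_def, hom_eval₂]
    rfl
  have e3 : r.map ρ = 0 := by
    by_contra hne
    have h4 := minpoly.degree_le_of_ne_zero L (π q) hne e2
    rw [← hmin, degree_X_pow_sub_C hp.out.pos] at h4
    exact absurd (h4.trans (degree_map_le)) (not_le.2 hdeg)
  have e4 : r = 0 := (Polynomial.map_eq_zero_iff hρ).1 e3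
  rw [e4, map_zero]

theorem exists_section {k Q : Type} [Field k] [CommRing Q] (p : ℕ) [hp : Fact p.Prime] [CharP k p]
    [CharP Q p] (π : Q →+* k) (hsurj : Function.Surjective π)
    (hsq : ∀ a, π a = 0 → a ^ 2 = 0) : ∃ g : k →+* Q, π.comp g = RingHom.id k := by
  let 𝒮 : Set (Subring Q) := {G | (∀ q, q ^ p ∈ G) ∧ ∀ g ∈ G, π g = 0 → g = 0}
  have h0 : (frobenius Q p).range ∈ 𝒮 := by
    refine ⟨fun q => ⟨q, rfl⟩, ?_⟩
    rintro _ ⟨q, rfl⟩ h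
    rw [frobenius_def, map_pow] at h
    have h2 := hsq q (pow_eq_zero_iff hp.out.ne_zero |>.1 h)
    rw [frobenius_def]
    exact pow_eq_zero_of_le hp.out.two_le h2
  obtain ⟨G, -, hG⟩ := zorn_le_nonempty₀ 𝒮 (by
    intro c hc hch y hy
    refine ⟨sSup c, ⟨fun q => (le_sSup hy : y ≤ _) ((hc hy).1 q), ?_⟩, fun z hz => le_sSup hz⟩
    intro g hg
    rw [Subring.mem_sSup_of_directedOn ⟨y, hy⟩ hch.directedOn] at hg
    obtain ⟨s, hs, hgs⟩ := hg
    exact (hc hs).2 g hgs) _ h0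
  have hGs : ∀ x : k, ∃ g : G, π g = x := by
    by_contra! h
    obtain ⟨x, hx⟩ := h
    obtain ⟨q, rfl⟩ := hsurj x
    have h1 := section_step p π G hG.1.1 hsurj hG.1.2 q (fun g hg => hx ⟨g, hg⟩)
    have hle : G ≤ (Algebra.adjoin G {q}).toSubring := fun g hg =>
      (Algebra.adjoin G {q}).algebraMap_mem ⟨g, hg⟩
    have h2 := hG.2 (y := (Algebra.adjoin G {q}).toSubring) ⟨fun t => hle (hG.1.1 t), h1⟩ hle
    exact hx ⟨q, h2 (Algebra.subset_adjoin rfl : q ∈ Algebra.adjoin G {q})⟩ rfl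
  let e : G ≃+* k := RingEquiv.ofBijective (π.comp G.subtype) ⟨by
    rw [injective_iff_map_eq_zero]
    intro g hg
    exact Subtype.ext (hG.1.2 g g.2 hg), hGs⟩
  refine ⟨G.subtype.comp (e.symm : k →+* G), ?_⟩
  ext x
  exact e.apply_symm_apply x

theorem formallySmooth_zmod (k : Type) [Field k] (p : ℕ) [hp : Fact p.Prime] [CharP k p]
    [Algebra (ZMod p) k] : Algebra.FormallySmooth (ZMod p) k := by
  let f : MvPolynomial k (ZMod p) →ₐ[ZMod p] k := MvPolynomial.aeval id
  have hf : Function.Surjective f := fun x => ⟨MvPolynomial.X x, by simp [f]⟩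
  have hs : Function.Surjective f.kerSquareLift :=
    Ideal.Quotient.lift_surjective_of_surjective _ _ hf
  have : Nontrivial (MvPolynomial k (ZMod p) ⧸ RingHom.ker f.toRingHom ^ 2) :=
    hs.nontrivial
  have : CharP (MvPolynomial k (ZMod p) ⧸ RingHom.ker f.toRingHom ^ 2) p :=
    charP_of_injective_algebraMap (algebraMap (ZMod p) _).injective p
  have sqz : RingHom.ker f.kerSquareLift.toRingHom ^ 2 = ⊥ := by
    rw [AlgHom.ker_kerSquareLift, Ideal.cotangentIdeal_square]
  obtain ⟨g, hg⟩ := exists_section p f.kerSquareLift.toRingHom hs (by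
    intro a ha
    have : a ^ 2 ∈ RingHom.ker f.kerSquareLift.toRingHom ^ 2 := Ideal.pow_mem_pow ha 2
    rw [sqz] at this
    exact this)
  refine (Algebra.FormallySmooth.iff_split_surjection f hf).2
    ⟨{ g with commutes' := fun r => ?_ }, ?_⟩
  · exact congrFun (congrArg DFunLike.coe (RingHom.ext_zmod (g.comp (algebraMap (ZMod p) k))
      (algebraMap (ZMod p) _))) r
  · ext x
    exact congrFun (congrArg DFunLike.coe hg) x

theorem exists_coeffField (R : Type) [CommRing R] [IsLocalRing R] [IsAdicComplete (maximalIdeal R) R]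
    (p : ℕ) [hp : Fact p.Prime] [CharP R p] :
    ∃ g : ResidueField R →+* R, ∀ x, residue R (g x) = x := by
  let _ : Algebra (ZMod p) R := ZMod.algebra R p
  have : CharP (ResidueField R) p := charP_of_injective_algebraMap
    (algebraMap (ZMod p) (ResidueField R)).injective p
  have := formallySmooth_zmod (ResidueField R) p
  obtain ⟨g, hg⟩ := Algebra.FormallySmooth.exists_mkₐ_comp_eq_of_isAdicComplete
    (R := ZMod p) (A := ResidueField R) (I := maximalIdeal R) (AlgHom.id (ZMod p) (ResidueField R))
  exact ⟨g, fun x => congrFun (congrArg DFunLike.coe hg) x⟩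

end CoeffField

open IsLocalRing TensorProduct
set_option synthInstance.maxHeartbeats 1000000
set_option maxHeartbeats 1000000
set_option linter.unusedSectionVars false

section PS
open MvPowerSeries
variable {k : Type} [Field k] {d : ℕ}

theorem ps_mem (s : Finset (Fin d)) : ∀ f : MvPowerSeries (Fin d) k,
    f ∈ Ideal.span (X '' (s : Set (Fin d)) : Set (MvPowerSeries (Fin d) k)) ↔
    ∀ m : Fin d →₀ ℕ, (∀ i ∈ s, m i = 0) → coeff m f = 0 := by
  classical
  intro f
  constructor
  · intro hf m hm
    induction hf using Submodule.span_induction generalizing m with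
    | mem x h =>
      obtain ⟨i, hi, rfl⟩ := h
      exact X_dvd_iff.1 dvd_rfl m (hm i hi)
    | zero => simp
    | add x y _ _ hx hy => rw [map_add, hx m hm, hy m hm, add_zero]
    | smul a x hx' hx =>
      rw [smul_eq_mul, coeff_mul]
      refine Finset.sum_eq_zero fun ij hij => ?_
      rw [Finset.HasAntidiagonal.mem_antidiagonal] at hij
      rw [hx ij.2 (fun i hi => by
        have := hm i hi
        rw [← hij, Finsupp.add_apply] at this
        omega), mul_zero]
  · induction s using Finset.induction_on generalizing f with
    | empty =>
      intro h
      have : f = 0 := by ext m; simpa using h m (by simp)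
      rw [this]; exact zero_mem _
    | insert i s hi ih =>
      intro h
      let g : MvPowerSeries (Fin d) k := fun m => if m i = 0 then coeff m f else 0
      have hg : ∀ m, coeff m g = if m i = 0 then coeff m f else 0 := fun m => rfl
      have h1 : g ∈ Ideal.span (X '' (s : Set (Fin d)) : Set (MvPowerSeries (Fin d) k)) := by
        refine ih g fun m hm => ?_
        rw [hg]
        split_ifs with h0
        · refine h m fun j hj => ?_
          rcases Finset.mem_insert.1 hj with rfl | hj
          · exact h0
          · exact hm j hj
        · rfl
      have h2 : (X i : MvPowerSeries (Fin d) k) ∣ f - g := by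
        rw [X_dvd_iff]
        intro m hm
        rw [map_sub, hg, if_pos hm, sub_self]
      rw [← sub_add_cancel f g]
      refine add_mem ?_ (Ideal.span_mono (Set.image_mono (by simp)) h1)
      obtain ⟨q, hq⟩ := h2
      rw [hq]
      exact Ideal.mul_mem_right _ _ (Ideal.subset_span ⟨i, by simp, rfl⟩)

theorem ps_nzd (s : Finset (Fin d)) (i : Fin d) (hi : i ∉ s) (f : MvPowerSeries (Fin d) k)
    (hf : X i * f ∈ Ideal.span (X '' (s : Set (Fin d)) : Set (MvPowerSeries (Fin d) k))) :
    f ∈ Ideal.span (X '' (s : Set (Fin d)) : Set (MvPowerSeries (Fin d) k)) := by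
  classical
  rw [ps_mem] at hf ⊢
  intro m hm
  have := hf (Finsupp.single i 1 + m) (fun j hj => by
    rw [Finsupp.add_apply, hm j hj, Finsupp.single_apply, if_neg]
    rintro rfl; exact hi hj)
  rw [X, coeff_add_monomial_mul] at this
  simpa using this

theorem ps_max : maximalIdeal (MvPowerSeries (Fin d) k) =
    Ideal.span (Set.range (X : Fin d → MvPowerSeries (Fin d) k)) := by
  ext f
  have := ps_mem Finset.univ f
  rw [Finset.coe_univ, Set.image_univ] at this
  rw [this, IsLocalRing.mem_maximalIdeal, mem_nonunits_iff, isUnit_iff_constantCoeff,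
    isUnit_iff_ne_zero, not_not]
  constructor
  · intro h m hm
    have : m = 0 := by ext i; exact hm i (Finset.mem_univ _)
    rw [this]; exact h
  · intro h
    exact h 0 (by simp)

theorem ps_reg_aux (e : ℕ) (he : e ≤ d) : Reg (MvPowerSeries (Fin d) k) e
    (Ideal.span (X '' {i : Fin d | (i : ℕ) < e})) := by
  induction e with
  | zero =>
    have : ({i : Fin d | (i : ℕ) < 0}) = ∅ := by ext; simp
    rw [this, Set.image_empty, Ideal.span_empty]
    exact Reg.zero
  | succ e ih =>
    have h1 : {i : Fin d | (i : ℕ) < e + 1} = {i : Fin d | (i : ℕ) < e} ∪ {⟨e, he⟩} := by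
      ext i; simp [Fin.ext_iff]; omega
    rw [h1, Set.image_union, Ideal.span_union, Set.image_singleton]
    refine Reg.succ _ _ _ (ih (by omega)) fun a ha => ?_
    have h2 : {i : Fin d | (i : ℕ) < e} =
      ((Finset.univ.filter fun i : Fin d => (i : ℕ) < e : Finset (Fin d)) : Set (Fin d)) := by
      ext; simp
    rw [h2] at ha ⊢
    exact ps_nzd _ _ (by simp) _ ha

theorem ps_reg : Reg (MvPowerSeries (Fin d) k) d (maximalIdeal (MvPowerSeries (Fin d) k)) := by
  rw [ps_max]
  have := ps_reg_aux (k := k) d le_rfl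
  have h1 : {i : Fin d | (i : ℕ) < d} = Set.univ := by ext i; simp
  rwa [h1, Set.image_univ] at this

end PS

open IsLocalRing TensorProduct
set_option synthInstance.maxHeartbeats 1000000
set_option maxHeartbeats 1000000
set_option linter.unusedSectionVars false

section PSMap
open MvPowerSeries
variable {k : Type} [Field k] {d : ℕ}

theorem exists_eval (R : Type) [CommRing R] (I : Ideal R) [IsAdicComplete I R]
    [Algebra k R] (z : Fin d → R) (hz : ∀ i, z i ∈ I) :
    ∃ φ : MvPowerSeries (Fin d) k →+* R, ∀ q : MvPolynomial (Fin d) k,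
      φ (q : MvPowerSeries (Fin d) k) = MvPolynomial.aeval z q := by
  have hle : (MvPolynomial.idealOfVars (Fin d) k).map (MvPolynomial.aeval z : _ →ₐ[k] R) ≤ I := by
    rw [MvPolynomial.idealOfVars, Ideal.map_span, Ideal.span_le]
    rintro _ ⟨_, ⟨i, rfl⟩, rfl⟩
    simpa using hz i
  have hle' : ∀ n, MvPolynomial.idealOfVars (Fin d) k ^ n ≤
      (I ^ n).comap (MvPolynomial.aeval z : _ →ₐ[k] R) := fun n => by
    rw [← Ideal.map_le_iff_le_comap, Ideal.map_pow]
    exact Ideal.pow_right_mono hle n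
  let f : (n : ℕ) → MvPowerSeries (Fin d) k →+* R ⧸ I ^ n := fun n =>
    (Ideal.quotientMap (I ^ n) (MvPolynomial.aeval z : _ →ₐ[k] R).toRingHom (hle' n)).comp
      (truncTotalAlgHom (Fin d) k n).toRingHom
  have hf : ∀ n q, f n q = Ideal.Quotient.mk (I ^ n) (MvPolynomial.aeval z (truncTotal n q)) :=
    fun n q => rfl
  have hc : ∀ {m n : ℕ} (hmn : m ≤ n), (Ideal.Quotient.factorPow I hmn).comp (f n) = f m := by
    intro m n hmn
    ext q
    rw [RingHom.comp_apply, hf, hf]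
    change Ideal.Quotient.mk (I ^ m) _ = _
    rw [Ideal.Quotient.eq, ← map_sub]
    exact hle' m (truncTotal_sub_truncTotal_mem_pow_idealOfVars hmn le_rfl q)
  refine ⟨IsAdicComplete.liftRingHom I f hc, ?_⟩
  intro q
  rw [IsHausdorff.eq_iff_smodEq (I := I)]
  intro n
  have := IsAdicComplete.mk_liftRingHom I f hc n (q : MvPowerSeries (Fin d) k)
  have h2 : MvPolynomial.aeval z (truncTotal n (q : MvPowerSeries (Fin d) k)) -
      MvPolynomial.aeval z q ∈ I ^ n := by
    rw [← map_sub]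
    refine hle' n ?_
    rw [MvPolynomial.mem_pow_idealOfVars_iff']
    intro x h
    rw [MvPolynomial.coeff_sub, sub_eq_zero, coeff_truncTotal _ h, MvPolynomial.coeff_coe]
  rw [hf, Ideal.Quotient.eq] at this
  rw [SModEq.sub_mem, smul_eq_mul, Ideal.mul_top]
  simpa using add_mem this h2

theorem pi_smul_top {A : Type} [CommRing A] (I : Ideal A) {r : ℕ} (v : Fin r → A) :
    v ∈ (I • ⊤ : Submodule A (Fin r → A)) ↔ ∀ i, v i ∈ I := by
  constructor
  · intro h i
    have : (I • ⊤ : Submodule A (Fin r → A)) ≤ Submodule.comap (LinearMap.proj i) I := by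
      rw [Submodule.smul_le]
      intro a ha n _
      exact I.mul_mem_right _ ha
    exact this h
  · intro h
    rw [pi_eq_sum_univ v]
    exact Submodule.sum_mem _ fun i _ => Submodule.smul_mem_smul (h i) trivial

theorem pi_precomplete {A : Type} [CommRing A] (I : Ideal A) [IsAdicComplete I A] (r : ℕ) :
    IsPrecomplete I (Fin r → A) := by
  constructor
  intro f hf
  have h1 : ∀ i, ∃ L : A, ∀ n, f n i ≡ L [SMOD (I ^ n • ⊤ : Submodule A A)] := fun i => by
    refine IsPrecomplete.prec' (I := I) (fun n => f n i) fun {m n} hmn => ?_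
    have := hf hmn
    rw [SModEq.sub_mem, pi_smul_top] at this
    rw [SModEq.sub_mem, smul_eq_mul, Ideal.mul_top]
    exact this i
  choose L hL using h1
  refine ⟨L, fun n => ?_⟩
  rw [SModEq.sub_mem, pi_smul_top]
  intro i
  have := hL i n
  rwa [SModEq.sub_mem, smul_eq_mul, Ideal.mul_top] at this

theorem finite_of_complete {A R : Type} [CommRing A] [CommRing R] [IsLocalRing R]
    [IsNoetherianRing R] [Algebra A R] (I : Ideal A) [IsAdicComplete I A]
    (hres : ∀ r : R, ∃ a : A, r - algebraMap A R a ∈ maximalIdeal R)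
    (hI : I.map (algebraMap A R) ≤ maximalIdeal R) (N : ℕ)
    (hN : maximalIdeal R ^ N ≤ I.map (algebraMap A R)) : Module.Finite A R := by
  have key : ∀ n : ℕ, ∃ E : Finset R, ∀ r : R, ∃ s ∈ Submodule.span A (E : Set R),
      r - s ∈ maximalIdeal R ^ n := by
    classical
    intro n
    induction n with
    | zero => exact ⟨∅, fun r => ⟨0, zero_mem _, by simp⟩⟩
    | succ n ih =>
      obtain ⟨E, hE⟩ := ih
      obtain ⟨T, hT⟩ := (IsNoetherian.noetherian (maximalIdeal R ^ n))
      refine ⟨E ∪ T, fun r => ?_⟩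
      obtain ⟨s, hs, hrs⟩ := hE r
      have : ∀ t ∈ maximalIdeal R ^ n, ∃ s ∈ Submodule.span A (T : Set R),
          t - s ∈ maximalIdeal R ^ (n + 1) := by
        intro t ht
        rw [← hT] at ht
        induction ht using Submodule.span_induction with
        | mem x hx => exact ⟨x, Submodule.subset_span hx, by simp⟩
        | zero => exact ⟨0, zero_mem _, by simp⟩
        | add x y _ _ hx hy =>
          obtain ⟨s, hs, h1⟩ := hx
          obtain ⟨s', hs', h1'⟩ := hy
          refine ⟨s + s', add_mem hs hs', ?_⟩
          rw [add_sub_add_comm]; exact add_mem h1 h1'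
        | smul b x hx' hx =>
          obtain ⟨s, hs, h1⟩ := hx
          obtain ⟨a, ha⟩ := hres b
          refine ⟨a • s, Submodule.smul_mem _ _ hs, ?_⟩
          have hx2 : x ∈ maximalIdeal R ^ n := by rw [← hT]; exact hx'
          have : b • x - a • s = (b - algebraMap A R a) * x + algebraMap A R a * (x - s) := by
            rw [Algebra.smul_def a, smul_eq_mul]; ring
          rw [this]
          refine add_mem ?_ (Ideal.mul_mem_left _ _ h1)
          rw [pow_succ']
          exact Ideal.mul_mem_mul ha hx2
      obtain ⟨s', hs', h'⟩ := this _ hrs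
      refine ⟨s + s', add_mem (Submodule.span_mono (by simp) hs)
        (Submodule.span_mono (by simp) hs'), ?_⟩
      rwa [← sub_sub]
  obtain ⟨E, hE⟩ := key N
  let F : (Fin E.card → A) →ₗ[A] R := Fintype.linearCombination A (fun i => (E.equivFin.symm i : R))
  have hF : LinearMap.range F = Submodule.span A (E : Set R) := by
    rw [Fintype.range_linearCombination]
    congr 1
    ext x
    constructor
    · rintro ⟨i, rfl⟩; exact (E.equivFin.symm i).2
    · intro hx; exact ⟨E.equivFin ⟨x, hx⟩, by simp⟩
  have := pi_precomplete I E.card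
  have : IsHausdorff I R := IsHausdorff.of_map (S := R) (J := maximalIdeal R) hI
  have hs : Function.Surjective F := by
    refine surjective_of_mkQ_comp_surjective (I := I) fun y => ?_
    obtain ⟨y, rfl⟩ := Submodule.mkQ_surjective _ y
    obtain ⟨s, hs, h⟩ := hE y
    rw [← hF] at hs
    obtain ⟨v, rfl⟩ := hs
    refine ⟨v, ?_⟩
    symm
    rw [LinearMap.comp_apply, Submodule.mkQ_apply, Submodule.mkQ_apply, Submodule.Quotient.eq,
      Ideal.smul_top_eq_map]
    exact hN h
  exact Module.Finite.of_surjective F hs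

theorem dim_le_of_integral (A R : Type) [CommRing A] [CommRing R] [Algebra A R]
    [Algebra.IsIntegral A R] : ringKrullDim R ≤ ringKrullDim A := by
  refine Order.krullDim_le_of_strictMono (fun P => PrimeSpectrum.comap (algebraMap A R) P) ?_
  intro P Q h
  exact Ideal.IsIntegral.comap_lt_comap h

theorem inj_of_dim {A R : Type} [CommRing A] [IsDomain A] [IsNoetherianRing A] [IsLocalRing A]
    [CommRing R] [IsDomain R] [Algebra A R]
    [Algebra.IsIntegral A R] (h : ringKrullDim A ≤ ringKrullDim R) :
    Function.Injective (algebraMap A R) := by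
  rw [injective_iff_map_eq_zero]
  intro a ha
  by_contra h0
  have ha' : a ∈ maximalIdeal A := by
    rw [mem_maximalIdeal, mem_nonunits_iff]
    intro hu
    have := hu.map (algebraMap A R)
    rw [ha] at this
    exact not_isUnit_zero this
  let _ : Algebra (A ⧸ Ideal.span {a}) R := (Ideal.Quotient.lift (Ideal.span {a}) (algebraMap A R) (by
    intro b hb
    obtain ⟨c, rfl⟩ := Ideal.mem_span_singleton'.1 hb
    rw [map_mul, ha, mul_zero])).toAlgebra
  have : IsScalarTower A (A ⧸ Ideal.span {a}) R := IsScalarTower.of_algebraMap_eq fun x => rfl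
  have : Algebra.IsIntegral (A ⧸ Ideal.span {a}) R := Algebra.IsIntegral.tower_top A
  have h1 := dim_le_of_integral (A ⧸ Ideal.span {a}) R
  have h2 := ringKrullDim_quotient_span_singleton_succ_eq_ringKrullDim_of_mem_nonZeroDivisors
    (mem_nonZeroDivisors_of_ne_zero h0) ha'
  have h3 : ringKrullDim (A ⧸ Ideal.span {a}) + 1 ≤ ringKrullDim (A ⧸ Ideal.span {a}) := by
    rw [h2]; exact h.trans h1
  have h4 := ringKrullDim_quotient_le (Ideal.span {a})
  have h5 : ringKrullDim A ≠ ⊤ := ringKrullDim_ne_top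
  have : Nontrivial (A ⧸ Ideal.span {a}) := Ideal.Quotient.nontrivial_iff.2 (by
    intro h; rw [Ideal.span_singleton_eq_top] at h; exact ha' h)
  have h6 := ringKrullDim_nonneg_of_nontrivial (R := A ⧸ Ideal.span {a})
  revert h3 h4 h6
  generalize ringKrullDim (A ⧸ Ideal.span {a}) = e
  intro h3 h4 h6
  have h7 : e < ⊤ := h4.trans_lt (lt_top_iff_ne_top.2 h5)
  induction e with
  | bot => simp at h6
  | coe e =>
    induction e with
    | top => exact absurd h7 (by simp)
    | coe e =>
      norm_cast at h3
      omega

end PSMap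

open IsLocalRing TensorProduct
set_option synthInstance.maxHeartbeats 1000000
set_option maxHeartbeats 1000000
set_option linter.unusedSectionVars false

theorem flat_nzd {A M : Type} [CommRing A] [AddCommGroup M] [Module A M] [Module.Flat A M]
    {ι : Type} (s : Finset ι) (f : ι → A) (e : A)
    (hnz : ∀ a, e * a ∈ Ideal.span (f '' (s : Set ι)) → a ∈ Ideal.span (f '' (s : Set ι)))
    (u : M) (c : s → M) (h : e • u = ∑ i : s, f i • c i) :
    u ∈ (Ideal.span (f '' (s : Set ι)) • ⊤ : Submodule A M) := by
  let F : Option s → A := fun o => o.elim e (fun i => f i)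
  let x : Option s → M := fun o => o.elim u (fun i => - c i)
  have h0 : ∑ i, F i • x i = 0 := by
    rw [Fintype.sum_option]
    simp [F, x, h]
  obtain ⟨k, a, y, h1, h2⟩ := Module.Flat.isTrivialRelation_of_sum_smul_eq_zero h0
  have h3 : u = ∑ j, a none j • y j := h1 none
  rw [h3]
  refine Submodule.sum_mem _ fun j _ => Submodule.smul_mem_smul (hnz _ ?_) trivial
  have := h2 j
  rw [Fintype.sum_option] at this
  rw [show e * a none j = - ∑ i : s, f i * a (some i) j from eq_neg_of_add_eq_zero_left this]
  refine neg_mem (Submodule.sum_mem _ fun i _ => ?_)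
  exact Ideal.mul_mem_right _ _ (Ideal.subset_span ⟨i, i.2, rfl⟩)

theorem flat_RPlus (R : Type) [CommRing R] [IsDomain R] (p : ℕ) [Fact p.Prime] [CharP R p]
    (A : Type) [CommRing A] [IsDomain A] [IsNoetherianRing A] [IsLocalRing A] [Algebra A R]
    [Algebra.IsIntegral A R] (hinj : Function.Injective (algebraMap A R)) (d : ℕ)
    (hreg : Reg A d (maximalIdeal A)) : Module.Flat A (RPlus R) := by
  let K := AlgebraicClosure (FractionRing R)
  have hRK : Function.Injective (algebraMap R K) := by
    rw [IsScalarTower.algebraMap_eq R (FractionRing R) K]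
    exact (algebraMap (FractionRing R) K).injective.comp (IsFractionRing.injective R _)
  have : CharP K p := charP_of_injective_algebraMap hRK p
  have : IsScalarTower A R K := inferInstance
  have : FaithfulSMul A K := by
    rw [faithfulSMul_iff_algebraMap_injective, IsScalarTower.algebraMap_eq A R K]
    exact hRK.comp hinj
  have hht : (maximalIdeal A).height ≠ ⊤ := Ideal.height_ne_top (Ideal.IsPrime.ne_top inferInstance)
  obtain ⟨n, hn⟩ := ENat.ne_top_iff_exists.1 hht
  have hfl := flat_main K p (n + 1) A (WG.of_reg_maximalIdeal hreg) (by
    rw [← hn]; exact_mod_cast Nat.lt_succ_self n)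
  have hle : ∀ v : K, v ∈ integralClosure R K ↔ v ∈ IB A K := fun v => by
    constructor
    · intro h; exact isIntegral_trans (R := A) (A := R) v h
    · intro h; exact IsIntegral.tower_top (R := A) (A := R) h
  let e : RPlus R ≃ₗ[A] IB A K :=
    { toFun := fun v => ⟨v, (hle v).1 v.2⟩
      invFun := fun v => ⟨v, (hle v).2 v.2⟩
      map_add' := fun _ _ => rfl
      map_smul' := fun _ _ => rfl
      left_inv := fun _ => rfl
      right_inv := fun _ => rfl }
  exact Module.Flat.of_linearEquiv e

theorem nzd_of_sop (R : Type) [CommRing R] [IsDomain R] [IsNoetherianRing R] [IsLocalRing R]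
    [IsAdicComplete (maximalIdeal R) R] (p : ℕ) [Fact p.Prime] [CharP R p]
    (d : ℕ) (z : Fin d → R) (hz : IsSOP R z) (e : Fin d) (u : RPlus R)
    (hu : algebraMap R (RPlus R) (z e) * u ∈
      Ideal.span (⇑(algebraMap R (RPlus R)) '' (z '' {i | i < e}))) :
    u ∈ Ideal.span (⇑(algebraMap R (RPlus R)) '' (z '' {i | i < e})) := by
  obtain ⟨g, hg⟩ := exists_coeffField R p
  obtain ⟨hdim, hrad⟩ := hz
  let _ : Algebra (ResidueField R) R := g.toAlgebra
  have hzm : ∀ i, z i ∈ maximalIdeal R := fun i => by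
    rw [← hrad]; exact Ideal.le_radical (Ideal.subset_span ⟨i, rfl⟩)
  obtain ⟨φ, hφ⟩ := exists_eval (k := ResidueField R) R (maximalIdeal R) z hzm
  let A := MvPowerSeries (Fin d) (ResidueField R)
  have : IsDomain A := NoZeroDivisors.to_isDomain A
  let _ : Algebra A R := φ.toAlgebra
  have hX : ∀ i, algebraMap A R (MvPowerSeries.X i) = z i := fun i => by
    have := hφ (MvPolynomial.X i)
    rw [MvPolynomial.coe_X, MvPolynomial.aeval_X] at this
    exact this
  have hmap : (maximalIdeal A).map (algebraMap A R) = Ideal.span (Set.range z) := by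
    rw [ps_max, Ideal.map_span, ← Set.range_comp]
    congr 2
    ext i
    exact hX i
  have hcomp : IsAdicComplete (maximalIdeal A) A := by
    rw [ps_max]; infer_instance
  obtain ⟨N, hN⟩ := Ideal.exists_radical_pow_le_of_fg (Ideal.span (Set.range z))
    (IsNoetherian.noetherian _)
  have hfin : Module.Finite A R := by
    refine finite_of_complete (maximalIdeal A) ?_ ?_ N ?_
    · intro r
      refine ⟨MvPowerSeries.C (residue R r), ?_⟩
      have h1 : algebraMap A R (MvPowerSeries.C (residue R r)) = g (residue R r) := by
        have := hφ (MvPolynomial.C (residue R r))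
        rw [MvPolynomial.coe_C, MvPolynomial.aeval_C] at this
        exact this
      rw [h1, ← residue_eq_zero_iff, map_sub, hg, sub_self]
    · rw [hmap, ← hrad]; exact Ideal.le_radical
    · rw [hmap, ← hrad]; exact hN
  have hint : Algebra.IsIntegral A R := Algebra.IsIntegral.of_finite A R
  have hinj : Function.Injective (algebraMap A R) := by
    refine inj_of_dim ?_
    rw [hdim]
    refine (ringKrullDim_le_spanFinrank_maximalIdeal A).trans ?_
    rw [ps_max]
    have h1 := Submodule.spanFinrank_span_le_ncard_of_finite (R := A)
      (Set.finite_range (MvPowerSeries.X : Fin d → A))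
    have h2 : (Set.range (MvPowerSeries.X : Fin d → A)).ncard ≤ d := by
      rw [← Set.image_univ]
      exact (Set.ncard_image_le Set.finite_univ).trans (by simp [Set.ncard_univ])
    exact_mod_cast h1.trans h2
  have hflat := flat_RPlus R p A hinj d ps_reg
  have hs : {i : Fin d | i < e} = ((Finset.univ.filter fun i => i < e : Finset (Fin d)) : Set (Fin d)) := by
    ext; simp
  rw [Set.image_image, hs] at hu ⊢
  obtain ⟨c, hc⟩ := (Submodule.mem_span_image_finset_iff_exists_fun _).1 hu
  have ht : ∀ (a : A) (v : RPlus R), a • v = algebraMap R (RPlus R) (algebraMap A R a) * v :=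
    fun a v => by
      rw [← Algebra.smul_def, algebraMap_smul]
  have h3 := flat_nzd (M := RPlus R) (Finset.univ.filter fun i => i < e)
    (MvPowerSeries.X : Fin d → A) (MvPowerSeries.X e) (fun a => ps_nzd _ e (by simp) a) u c (by
      rw [ht, hX, ← hc]
      refine Finset.sum_congr rfl fun i _ => ?_
      rw [ht, hX, smul_eq_mul, mul_comm])
  refine (Submodule.smul_le (P := (Ideal.span _).restrictScalars A)).2 ?_ h3
  intro a ha v _
  rw [ht]
  refine Ideal.mul_mem_right _ _ ?_
  have h4 := Ideal.mem_map_of_mem ((algebraMap R (RPlus R)).comp (algebraMap A R)) ha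
  rw [Ideal.map_span, Set.image_image] at h4
  simpa [hX] using h4

open IsLocalRing TensorProduct
set_option synthInstance.maxHeartbeats 1000000
set_option maxHeartbeats 1000000
set_option linter.unusedSectionVars false

theorem dim_quot_le {R : Type} [CommRing R] [IsNoetherianRing R] [IsLocalRing R]
    {d : ℕ} (x : Fin d → R) (hx : IsSOP R x) (n : ℕ) (hnd : n ≤ d) :
    ringKrullDim (R ⧸ Ideal.span (x '' {i | (i : ℕ) < n})) ≤ ((d - n : ℕ) : WithBot ℕ∞) := by
  classical
  set I := Ideal.span (x '' {i | (i : ℕ) < n}) with hI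
  have hxm : ∀ i, x i ∈ maximalIdeal R := fun i => by
    rw [← hx.2]; exact Ideal.le_radical (Ideal.subset_span ⟨i, rfl⟩)
  have hIm : I ≤ maximalIdeal R := by
    rw [hI, Ideal.span_le]; rintro _ ⟨i, _, rfl⟩; exact hxm i
  have hnt : Nontrivial (R ⧸ I) := Ideal.Quotient.nontrivial_iff.2
    (fun h => (Ideal.IsPrime.ne_top (I := maximalIdeal R) inferInstance) (top_le_iff.1 (h ▸ hIm)))
  have hloc : IsLocalRing (R ⧸ I) :=
    IsLocalRing.of_surjective' (Ideal.Quotient.mk I) Ideal.Quotient.mk_surjective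
  let s : Finset (R ⧸ I) :=
    ((Finset.univ.filter (fun i : Fin d => n ≤ (i : ℕ))).image (fun i => Ideal.Quotient.mk I (x i)))
  have hcard : s.card ≤ d - n := by
    refine Finset.card_image_le.trans ?_
    rw [← Finset.card_map Fin.valEmbedding, ← Nat.card_Ico]
    apply Finset.card_le_card
    intro a ha
    simp only [Finset.mem_map, Finset.mem_filter, Finset.mem_univ, true_and] at ha
    obtain ⟨i, h1, rfl⟩ := ha
    simp [h1]
  have hmin : maximalIdeal (R ⧸ I) ∈ (Ideal.span (s : Set (R ⧸ I))).minimalPrimes := by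
    refine ⟨⟨inferInstance, ?_⟩, ?_⟩
    · rw [Ideal.span_le]
      intro a ha
      simp only [s, Finset.coe_image, Set.mem_image] at ha
      obtain ⟨i, _, rfl⟩ := ha
      rw [SetLike.mem_coe, mem_maximalIdeal, mem_nonunits_iff]
      intro hu
      have := (IsLocalRing.surjective_units_map_of_local_ringHom (Ideal.Quotient.mk I)
        Ideal.Quotient.mk_surjective (.of_surjective _ Ideal.Quotient.mk_surjective))
      obtain ⟨v, hv⟩ := this hu.unit
      have h2 : x i - v ∈ I := by
        rw [← Ideal.Quotient.eq]
        have := congrArg Units.val hv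
        simpa using this.symm
      have h3 : (v : R) ∈ maximalIdeal R := by
        have := sub_mem (hxm i) (hIm h2)
        simpa using this
      exact h3 v.isUnit
    · rintro Q ⟨hQ, hsQ⟩ _
      have hm : maximalIdeal R ≤ Q.comap (Ideal.Quotient.mk I) := by
        have hp : (Q.comap (Ideal.Quotient.mk I)).IsPrime := inferInstance
        rw [← hx.2, hp.radical_le_iff, Ideal.span_le]
        rintro _ ⟨i, rfl⟩
        rw [SetLike.mem_coe, Ideal.mem_comap]
        by_cases hi : (i : ℕ) < n
        · have hi' : x i ∈ I := Ideal.subset_span ⟨i, hi, rfl⟩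
          rw [Ideal.Quotient.eq_zero_iff_mem.2 hi']
          exact Q.zero_mem
        · exact hsQ (Ideal.subset_span (by
            simp only [s, Finset.coe_image, Set.mem_image]
            exact ⟨i, by simpa using hi, rfl⟩))
      intro a ha
      obtain ⟨b, rfl⟩ := Ideal.Quotient.mk_surjective a
      refine hm ?_
      rw [mem_maximalIdeal, mem_nonunits_iff] at ha ⊢
      exact fun h => ha (h.map _)
  have h := Ideal.height_le_card_of_mem_minimalPrimes_span_finset hmin
  rw [← IsLocalRing.maximalIdeal_height_eq_ringKrullDim]
  have h2 : (maximalIdeal (R ⧸ I)).height ≤ ((d - n : ℕ) : ℕ∞) :=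
    h.trans (by exact_mod_cast hcard)
  exact WithBot.coe_le_coe.2 h2

theorem exists_params {R : Type} [CommRing R] [IsNoetherianRing R] [IsLocalRing R]
    {d : ℕ} (x : Fin d → R) (hx : IsSOP R x) (n : ℕ) (hnd : n ≤ d) (c : R)
    (hcm : c ∈ maximalIdeal R)
    (hc : ∀ P ∈ (Ideal.span (x '' {i | (i : ℕ) < n})).minimalPrimes, c ∉ P) :
    ∃ t : Finset R, t.card + 1 ≤ d - n ∧ (t : Set R) ⊆ maximalIdeal R ∧
      ∀ Q : Ideal R, Q.IsPrime → Ideal.span (x '' {i | (i : ℕ) < n}) ≤ Q → c ∈ Q →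
        (t : Set R) ⊆ Q → maximalIdeal R ≤ Q := by
  classical
  have hdim := dim_quot_le x hx n hnd
  set I := Ideal.span (x '' {i | (i : ℕ) < n}) with hI
  have hxm : ∀ i, x i ∈ maximalIdeal R := fun i => by
    rw [← hx.2]; exact Ideal.le_radical (Ideal.subset_span ⟨i, rfl⟩)
  have hIm : I ≤ maximalIdeal R := by
    rw [hI, Ideal.span_le]; rintro _ ⟨i, _, rfl⟩; exact hxm i
  let J := I ⊔ Ideal.span {c}
  have hJm : J ≤ maximalIdeal R := sup_le hIm ((Ideal.span_singleton_le_iff_mem _).2 hcm)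
  have hnt : Nontrivial (R ⧸ J) := Ideal.Quotient.nontrivial_iff.2
    (fun h => (Ideal.IsPrime.ne_top (I := maximalIdeal R) inferInstance) (top_le_iff.1 (h ▸ hJm)))
  have hloc : IsLocalRing (R ⧸ J) :=
    IsLocalRing.of_surjective' (Ideal.Quotient.mk J) Ideal.Quotient.mk_surjective
  have h1 := Module.supportDim_quotSMulTop_succ_le_of_notMem_minimalPrimes (R := R) (M := R ⧸ I)
    (x := c) (by rw [Ideal.annihilator_quotient]; exact hc)
  have h2 : Module.supportDim R (R ⧸ J) ≤ Module.supportDim R (QuotSMulTop c (R ⧸ I)) := by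
    let g : (R ⧸ I) →ₗ[R] (R ⧸ J) := (Ideal.Quotient.factorₐ R (le_sup_left : I ≤ J)).toLinearMap
    have hg : Function.Surjective g := Ideal.Quotient.factor_surjective le_sup_left
    let f : QuotSMulTop c (R ⧸ I) →ₗ[R] (R ⧸ J) := Submodule.liftQ _ g (by
      intro a ha
      obtain ⟨b, _, rfl⟩ := (Submodule.mem_smul_pointwise_iff_exists _ _ _).1 ha
      rw [LinearMap.mem_ker, map_smul]
      obtain ⟨r, hr⟩ := Ideal.Quotient.mk_surjective (g b)
      rw [← hr, Algebra.smul_def]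
      change Ideal.Quotient.mk J c * _ = 0
      rw [Ideal.Quotient.eq_zero_iff_mem.2
        ((le_sup_right : _ ≤ J) (Ideal.mem_span_singleton_self c)), zero_mul])
    refine Module.supportDim_le_of_surjective f fun b => ?_
    obtain ⟨a, rfl⟩ := hg b
    exact ⟨Submodule.Quotient.mk a, rfl⟩
  rw [Module.supportDim_quotient_eq_ringKrullDim] at h1 h2
  obtain ⟨s, hsm, hsc⟩ := Ideal.exists_finset_card_eq_height_of_isNoetherianRing
    (maximalIdeal (R ⧸ J))
  have h3 : ((s.card + 1 : ℕ) : WithBot ℕ∞) ≤ ((d - n : ℕ) : WithBot ℕ∞) := by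
    refine le_trans ?_ ((add_le_add h2 le_rfl).trans (h1.trans hdim))
    rw [← IsLocalRing.maximalIdeal_height_eq_ringKrullDim, ← hsc]
    push_cast
    exact le_rfl
  have h4 : s.card + 1 ≤ d - n := by exact_mod_cast h3
  let l : R ⧸ J → R := Function.surjInv Ideal.Quotient.mk_surjective
  have hl : ∀ a, Ideal.Quotient.mk J (l a) = a := Function.surjInv_eq _
  refine ⟨s.image l, le_trans (by gcongr; exact Finset.card_image_le) h4, ?_, ?_⟩
  · intro a ha
    simp only [Finset.coe_image, Set.mem_image] at ha
    obtain ⟨b, hb, rfl⟩ := ha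
    have h5 : b ∈ maximalIdeal (R ⧸ J) := hsm.1.2 (Ideal.subset_span hb)
    rw [SetLike.mem_coe, mem_maximalIdeal, mem_nonunits_iff] at *
    intro h
    have := h.map (Ideal.Quotient.mk J)
    rw [hl] at this
    exact h5 this
  · intro Q hQ hIQ hcQ htQ
    have hJQ : J ≤ Q := sup_le hIQ ((Ideal.span_singleton_le_iff_mem _).2 hcQ)
    have hk : RingHom.ker (Ideal.Quotient.mk J) ≤ Q := by rwa [Ideal.mk_ker]
    have hQ' : (Q.map (Ideal.Quotient.mk J)).IsPrime :=
      Ideal.map_isPrime_of_surjective Ideal.Quotient.mk_surjective hk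
    have h6 : maximalIdeal (R ⧸ J) ≤ Q.map (Ideal.Quotient.mk J) := by
      refine hsm.2 ⟨hQ', ?_⟩ (le_maximalIdeal hQ'.ne_top)
      rw [Ideal.span_le]
      intro b hb
      rw [← hl b]
      exact Ideal.mem_map_of_mem _ (htQ (by
        simp only [Finset.coe_image, Set.mem_image]; exact ⟨b, hb, rfl⟩))
    intro a ha
    have h7 : Ideal.Quotient.mk J a ∈ Q.map (Ideal.Quotient.mk J) := by
      have hne : Q.map (Ideal.Quotient.mk J) ≠ ⊤ := hQ'.ne_top
      apply h6
      rw [mem_maximalIdeal, mem_nonunits_iff]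
      intro hu
      obtain ⟨b, hb⟩ := hu.exists_right_inv
      obtain ⟨b, rfl⟩ := Ideal.Quotient.mk_surjective b
      rw [← map_mul, ← map_one (Ideal.Quotient.mk J), Ideal.Quotient.eq] at hb
      have := sub_mem (Ideal.mul_mem_right b _ ha) (hJm hb)
      rw [sub_sub_cancel] at this
      exact (Ideal.ne_top_iff_one _).1 (Ideal.IsPrime.ne_top (I := maximalIdeal R) inferInstance) this
    rw [Ideal.mem_map_iff_of_surjective _ Ideal.Quotient.mk_surjective] at h7
    obtain ⟨q, hq, hqa⟩ := h7
    rw [Ideal.Quotient.eq] at hqa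
    have := sub_mem hq (hJQ hqa)
    simpa using this

theorem c_nzd (R : Type) [CommRing R] [IsDomain R] [IsNoetherianRing R] [IsLocalRing R]
    [IsAdicComplete (maximalIdeal R) R] (p : ℕ) [Fact p.Prime] [CharP R p]
    (d : ℕ) (x : Fin d → R) (hx : IsSOP R x) (n : ℕ) (hnd : n ≤ d) (c : R)
    (hc : ∀ P ∈ (Ideal.span (x '' {i | (i : ℕ) < n})).minimalPrimes, c ∉ P) (u : RPlus R)
    (hu : algebraMap R (RPlus R) c * u ∈
      Ideal.span (⇑(algebraMap R (RPlus R)) '' (x '' {i | (i : ℕ) < n}))) :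
    u ∈ Ideal.span (⇑(algebraMap R (RPlus R)) '' (x '' {i | (i : ℕ) < n})) := by
  classical
  by_cases hcu : IsUnit c
  · exact (Ideal.unit_mul_mem_iff_mem _ (hcu.map _)).1 hu
  have hcm : c ∈ maximalIdeal R := hcu
  obtain ⟨t, ht, htm, hQ⟩ := exists_params x hx n hnd c hcm hc
  have hnd' : n < d := by omega
  have hxm : ∀ i, x i ∈ maximalIdeal R := fun i => by
    rw [← hx.2]; exact Ideal.le_radical (Ideal.subset_span ⟨i, rfl⟩)
  let w : ℕ → R := fun k => if h : k < t.card then (t.equivFin.symm ⟨k, h⟩ : R) else 0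
  have hwm : ∀ k, w k ∈ maximalIdeal R := by
    intro k
    simp only [w]
    split_ifs with h
    · exact htm (Subtype.mem _)
    · exact zero_mem _
  let z : Fin d → R := fun i => if (i : ℕ) < n then x i else if (i : ℕ) = n then c else w (i - n - 1)
  have hz : IsSOP R z := by
    refine ⟨hx.1, le_antisymm ?_ ?_⟩
    · rw [(inferInstance : (maximalIdeal R).IsPrime).radical_le_iff, Ideal.span_le]
      rintro _ ⟨i, rfl⟩
      simp only [z]
      split_ifs
      · exact hxm i
      · exact hcm
      · exact hwm _
    · rw [Ideal.radical_eq_sInf]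
      refine le_sInf fun Q hQ' => ?_
      obtain ⟨hle, hprime⟩ := hQ'
      have hzQ : ∀ i, z i ∈ Q := fun i => hle (Ideal.subset_span ⟨i, rfl⟩)
      refine hQ Q hprime ?_ ?_ ?_
      · rw [Ideal.span_le]
        rintro _ ⟨i, hi, rfl⟩
        have := hzQ i
        simp only [Set.mem_ofPred_eq] at hi
        simpa [z, hi] using this
      · simpa [z] using hzQ ⟨n, hnd'⟩
      · intro a ha
        let k := t.equivFin ⟨a, ha⟩
        have hk : (k : ℕ) < t.card := k.2
        have h1 := hzQ ⟨n + 1 + k, by omega⟩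
        have h2 : z ⟨n + 1 + k, by omega⟩ = a := by
          simp only [z]
          rw [if_neg (by omega), if_neg (by omega)]
          have : n + 1 + (k : ℕ) - n - 1 = k := by omega
          rw [this]
          simp [w, k]
        rwa [h2] at h1
  have hset : z '' {i | i < (⟨n, hnd'⟩ : Fin d)} = x '' {i | (i : ℕ) < n} := by
    have : {i | i < (⟨n, hnd'⟩ : Fin d)} = {i : Fin d | (i : ℕ) < n} := by
      ext i; simp [Fin.lt_def]
    rw [this]
    refine Set.image_congr fun i hi => ?_
    simp only [Set.mem_ofPred_eq] at hi
    simp [z, hi]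
  have := nzd_of_sop R p d z hz ⟨n, hnd'⟩ u (by
    rw [hset]; simpa [z] using hu)
  rwa [hset] at this

theorem exists_split {R : Type} [CommRing R] [IsNoetherianRing R] (I : Ideal R) (y : R) :
    ∃ M : ℕ, 0 < M ∧ ∃ b : R, y ^ M * b ∈ I ∧ ∀ P ∈ I.minimalPrimes, y ^ M + b ∉ P := by
  classical
  have hfin := Ideal.finite_minimalPrimes_of_isNoetherianRing R I
  let P1 : Finset (Ideal R) := hfin.toFinset.filter (fun P => y ∉ P)
  let P2 : Set (Ideal R) := {P | P ∈ I.minimalPrimes ∧ y ∈ P}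
  have hP2 : P2.Finite := hfin.subset fun P h => h.1
  have h1 : ¬ (((P1.inf id : Ideal R) : Set R) ⊆ ⋃ P ∈ P2, ((id P : Ideal R) : Set R)) := by
    rw [Ideal.subset_union_prime_finite (f := id) hP2 ⊥ ⊥ (fun i hi _ _ => hi.1.1.1)]
    rintro ⟨P, hP, hle⟩
    have hPp : P.IsPrime := hP.1.1.1
    obtain ⟨Q, hQ, hQP⟩ := hPp.inf_le'.1 hle
    simp only [P1, Finset.mem_filter, Set.Finite.mem_toFinset] at hQ
    exact hQ.2 (hP.1.2 hQ.1.1 hQP hP.2)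
  obtain ⟨b, hb1, hb2⟩ := Set.not_subset.1 h1
  simp only [Set.mem_iUnion, not_exists] at hb2
  have hb1' : ∀ P ∈ I.minimalPrimes, y ∉ P → b ∈ P := fun P hP hy =>
    (Finset.inf_le (f := id) (show P ∈ P1 by simp [P1, hP, hy])) hb1
  have hrad : y * b ∈ I.radical := by
    rw [← Ideal.sInf_minimalPrimes, Ideal.mem_sInf]
    intro P hP
    by_cases hy : y ∈ P
    · exact Ideal.mul_mem_right _ _ hy
    · exact Ideal.mul_mem_left _ _ (hb1' P hP hy)
  obtain ⟨M, hM⟩ := hrad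
  refine ⟨M + 1, M.succ_pos, b ^ (M + 1), ?_, ?_⟩
  · rw [← mul_pow, pow_succ]; exact Ideal.mul_mem_right _ _ hM
  · intro P hP hmem
    have hPp : P.IsPrime := hP.1.1
    by_cases hy : y ∈ P
    · have h2 : y ^ (M + 1) ∈ P := Ideal.pow_mem_of_mem _ hy _ M.succ_pos
      have h3 := (Ideal.add_mem_iff_right _ h2).1 hmem
      exact hb2 P ⟨hP, hy⟩ (hPp.mem_of_pow_mem _ h3)
    · have h2 : b ^ (M + 1) ∈ P := Ideal.pow_mem_of_mem _ (hb1' P hP hy) _ M.succ_pos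
      exact hy (hPp.mem_of_pow_mem _ ((Ideal.add_mem_iff_left _ h2).1 hmem))

/-- For a `d`-dimensional complete local domain `R` of characteristic `p`,
the colon ideal `(x₁, …, xₙ)R⁺ : y^∞` stabilizes at a finite power for every `1 ≤ n ≤ d`. -/
theorem stmt17 (R : Type) [CommRing R] [IsDomain R] [IsNoetherianRing R] [IsLocalRing R]
    [IsAdicComplete (maximalIdeal R) R]
    (p : ℕ) [Fact p.Prime] [CharP R p]
    (d : ℕ) (x : Fin d → R) (hx : IsSOP R x)
    (n : ℕ) (hn1 : 1 ≤ n) (hnd : n ≤ d) (y : R) :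
    ∃ N₀ : ℕ, 0 < N₀ ∧
      (⨆ N : ℕ, (Ideal.span (⇑(algebraMap R (RPlus R)) '' (x '' {i | (i : ℕ) < n}))).colon
          (Ideal.span {algebraMap R (RPlus R) y ^ N})) =
        (Ideal.span (⇑(algebraMap R (RPlus R)) '' (x '' {i | (i : ℕ) < n}))).colon
          (Ideal.span {algebraMap R (RPlus R) y ^ N₀}) := by
  obtain ⟨M, hM, b, hab, hc⟩ := exists_split (Ideal.span (x '' {i | (i : ℕ) < n})) y
  have hnz := c_nzd R p d x hx n hnd (y ^ M + b) hc
  have hmap : ∀ r ∈ Ideal.span (x '' {i | (i : ℕ) < n}), algebraMap R (RPlus R) r ∈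
      Ideal.span (⇑(algebraMap R (RPlus R)) '' (x '' {i | (i : ℕ) < n})) := by
    intro r hr
    rw [← Ideal.map_span]
    exact Ideal.mem_map_of_mem _ hr
  have hind : ∀ N : ℕ, (y ^ M + b) ^ N * y ^ M - (y ^ M) ^ (N + 1) ∈
      Ideal.span (x '' {i | (i : ℕ) < n}) := by
    intro N
    induction N with
    | zero => simp
    | succ N ih =>
      have : (y ^ M + b) ^ (N + 1) * y ^ M - (y ^ M) ^ (N + 1 + 1) =
          (y ^ M + b) * ((y ^ M + b) ^ N * y ^ M - (y ^ M) ^ (N + 1)) +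
            (y ^ M) ^ N * (y ^ M * b) := by ring
      rw [this]
      exact add_mem (Ideal.mul_mem_left _ _ ih) (Ideal.mul_mem_left _ _ hab)
  refine ⟨M, hM, le_antisymm (iSup_le fun N u hu => ?_) (le_iSup_of_le M le_rfl)⟩
  rw [Ideal.mem_colon_span_singleton] at hu ⊢
  have hpow : ∀ (N : ℕ) (v : RPlus R), algebraMap R (RPlus R) (y ^ M + b) ^ N * v ∈
      Ideal.span (⇑(algebraMap R (RPlus R)) '' (x '' {i | (i : ℕ) < n})) →
      v ∈ Ideal.span (⇑(algebraMap R (RPlus R)) '' (x '' {i | (i : ℕ) < n})) := by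
    intro N
    induction N with
    | zero => intro v hv; simpa using hv
    | succ N ih =>
      intro v hv
      rw [pow_succ, mul_assoc] at hv
      exact hnz _ (ih _ hv)
  apply hpow N
  have h1 := Ideal.mul_mem_right u _ (hmap _ (hind N))
  have h2 : u * algebraMap R (RPlus R) y ^ (M * (N + 1)) ∈
      Ideal.span (⇑(algebraMap R (RPlus R)) '' (x '' {i | (i : ℕ) < n})) := by
    have hle : N ≤ M * (N + 1) := by nlinarith
    obtain ⟨k, hk⟩ := Nat.exists_eq_add_of_le hle
    rw [hk, pow_add, ← mul_assoc]
    exact Ideal.mul_mem_right _ _ hu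
  have h3 := add_mem h1 h2
  convert h3 using 1
  simp only [map_sub, map_mul, map_pow, map_add]
  ring
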